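/- Let 1 ≤ q < ∞ and α, β ≥ 0. Then there exist constants c₁, c₂ > 0, depending only on q, α, β, such that for every n ∈ ℕ: c₁·n^{−1/q} ≤ E(M¹ ∩ B_{2q}^{α,β}, P_n)_{w_{α,β}, q} ≤ c₂·n^{−1/q}·[ln(n+1)]^{1/(2q)}. -/

import Mathlib

open MeasureTheory Set Filter
open scoped ENNReal

noncomputable section

/-- The Jacobi weight `w_{α,β}(x) = (1+x)^α (1-x)^β`. -/
def jacobi (α β : ℝ) (x : ℝ) : ℝ := (1 + x) ^ α * (1 - x) ^ β

/-- `φ(x) = √(1-x²)`. -/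
def phiW (x : ℝ) : ℝ := Real.sqrt (1 - x ^ 2)

/-- The `L^p` norm of `g` on the interval `[a,b]` (essential sup when `p = ∞`). -/
def LpOn (g : ℝ → ℝ) (p : ℝ≥0∞) (a b : ℝ) : ℝ≥0∞ :=
  eLpNorm g p (volume.restrict (Icc a b))

/-- The `k`-th symmetric difference `Δ_h^k(f,x)` relative to `[-1,1]`. -/
def symmDelta (k : ℕ) (h : ℝ) (f : ℝ → ℝ) (x : ℝ) : ℝ :=
  if (x - k * h / 2 ∈ Icc (-1 : ℝ) 1 ∧ x + k * h / 2 ∈ Icc (-1 : ℝ) 1) then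
    ∑ i ∈ Finset.range (k + 1), ((k.choose i : ℝ) * (-1 : ℝ) ^ (k - i) * f (x - k * h / 2 + i * h))
  else 0

/-- Main-part weighted modulus `Ω_φ^k(f,δ)_{w,p}`. -/
def OmegaMain (k : ℕ) (f : ℝ → ℝ) (δ : ℝ) (wt : ℝ → ℝ) (p : ℝ≥0∞) : ℝ≥0∞ :=
  ⨆ h ∈ Ioc (0 : ℝ) δ,
    LpOn (fun x => wt x * symmDelta k (h * phiW x) f x) p
      (-1 + 2 * (k : ℝ) ^ 2 * h ^ 2) (1 - 2 * (k : ℝ) ^ 2 * h ^ 2)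

/-- Forward part `Ω→_φ^k(f,δ)_{w,p}`. -/
def OmegaFwd (k : ℕ) (f : ℝ → ℝ) (δ : ℝ) (wt : ℝ → ℝ) (p : ℝ≥0∞) : ℝ≥0∞ :=
  ⨆ h ∈ Ioc (0 : ℝ) (2 * (k : ℝ) ^ 2 * δ ^ 2),
    LpOn (fun x => wt x * symmDelta k h f (x + k * h / 2)) p
      (-1) (-1 + 2 * (k : ℝ) ^ 2 * δ ^ 2)

/-- Backward part `Ω←_φ^k(f,δ)_{w,p}`. -/
def OmegaBwd (k : ℕ) (f : ℝ → ℝ) (δ : ℝ) (wt : ℝ → ℝ) (p : ℝ≥0∞) : ℝ≥0∞ :=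
  ⨆ h ∈ Ioc (0 : ℝ) (2 * (k : ℝ) ^ 2 * δ ^ 2),
    LpOn (fun x => wt x * symmDelta k h f (x - k * h / 2)) p
      (1 - 2 * (k : ℝ) ^ 2 * δ ^ 2) 1

/-- Weighted Ditzian–Totik modulus `ω_φ^k(f,δ)_{w,p}`. -/
def omegaDT (k : ℕ) (f : ℝ → ℝ) (δ : ℝ) (wt : ℝ → ℝ) (p : ℝ≥0∞) : ℝ≥0∞ :=
  OmegaMain k f δ wt p + OmegaFwd k f δ wt p + OmegaBwd k f δ wt p

/-- `f` is `k`-monotone on `(-1,1)`: all `k`-th divided differences over `k+1` distinct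
points of `(-1,1)` are nonnegative. -/
def kMonotoneOn (k : ℕ) (f : ℝ → ℝ) : Prop :=
  ∀ x : Fin (k + 1) → ℝ, Function.Injective x → (∀ i, x i ∈ Ioo (-1 : ℝ) 1) →
    0 ≤ ∑ i, f (x i) / ∏ j ∈ Finset.univ.erase i, (x i - x j)

/-- `M^k`, the class of `k`-monotone functions on `(-1,1)`. -/
def MSet (k : ℕ) : Set (ℝ → ℝ) := {f | kMonotoneOn k f}

/-- `M_+^k`, the `k`-monotone functions on `(-1,1)` vanishing on `(-1,0]`. -/
def MPlus (k : ℕ) : Set (ℝ → ℝ) :=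
  {f | kMonotoneOn k f ∧ ∀ x : ℝ, -1 < x → x ≤ 0 → f x = 0}

/-- `J_p = (-1/p, ∞)` for finite `p`, `[0,∞)` for `p = ∞`. -/
def Jset (p : ℝ≥0∞) : Set ℝ := if p = ∞ then Ici 0 else Ioi (-1 / p.toReal)

/-- `W_p^{α,β}`. -/
def WSet (p : ℝ≥0∞) (α β : ℝ) : Set (ℝ → ℝ) :=
  {f | Measurable f ∧ LpOn (fun x => jacobi α β x * f x) p (-1) 1 ≠ ⊤}

/-- `B_p^{α,β}`, the unit sphere of `W_p^{α,β}`. -/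
def BSet (p : ℝ≥0∞) (α β : ℝ) : Set (ℝ → ℝ) :=
  {f | Measurable f ∧ LpOn (fun x => jacobi α β x * f x) p (-1) 1 = 1}

/-- Best weighted approximation `E_n(f)_{w,q}` by polynomials of degree at most `n`. -/
def En (n : ℕ) (f : ℝ → ℝ) (wt : ℝ → ℝ) (q : ℝ≥0∞) : ℝ≥0∞ :=
  ⨅ P ∈ {P : Polynomial ℝ | P.natDegree ≤ n},
    LpOn (fun x => wt x * (f x - P.eval x)) q (-1) 1

/-- `E(X, P_n)_{w,q}`. -/
def EClass (X : Set (ℝ → ℝ)) (n : ℕ) (wt : ℝ → ℝ) (q : ℝ≥0∞) : ℝ≥0∞ :=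
  ⨆ f ∈ X, En n f wt q

/-!
Lower bound: take a multiple of `sign`. After multiplying by a power of `1 - x ^ 2`, which absorbs
the weight and the Jacobian of `x = sin θ`, Bernstein's inequality says that a polynomial of degree
`n` varies slowly on the angular scale `1 / n`, so it cannot follow the jump there.

Upper bound: sample `f` at the angular midpoints of `n + 1` equal cells of `[0, π]` and blend the
samples `F i` by a polynomial partition of unity built from a Jackson-type kernel. On a cell the
error is at most a sum of the jumps `|F k - F (k + 1)|` with rapid decay away from the cell. A Schur
test and summation by parts, where monotonicity enters, bound the weighted `ℓ^p` norm of these sums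
by `∑ |F i| ^ p * w i ^ p * ℓ i * (1 / (i + 1) + 1 / (n + 1 - i))`, with `ℓ i` the cell length.
Cauchy–Schwarz against the `L^{2p}` norm of `f` leaves a harmonic sum, which is the origin of the
logarithm and of its exponent `1 / (2p)`.
-/

/-! ### Bernstein's inequality for algebraic polynomials in `sin θ` -/

section Bernstein

open Polynomial

variable {f : ℂ → ℂ} {A B σ : ℝ}

lemma norm_le_mul_exp_im_of_im_nonneg (hf : Differentiable ℂ f)
    (hA : ∀ z, ‖f z‖ ≤ A * Real.exp (σ * |z.im|)) (hB : ∀ x : ℝ, ‖f x‖ ≤ B)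
    {z : ℂ} (hz : 0 ≤ z.im) : ‖f z‖ ≤ B * Real.exp (σ * z.im) := by
  -- Phragmén–Lindelöf in the right half-plane, for `f` rotated and damped to be bounded there.
  set g : ℂ → ℂ := fun w ↦ Complex.exp (-σ * w) * f (w * Complex.I) with hg
  have norm_g (w : ℂ) : ‖g w‖ = Real.exp (-(σ * w.re)) * ‖f (w * Complex.I)‖ := by
    simp [hg, Complex.norm_exp]
  have g_le {w : ℂ} (hw : 0 ≤ w.re) : ‖g w‖ ≤ A := by
    calc ‖g w‖ ≤ Real.exp (-(σ * w.re)) * (A * Real.exp (σ * w.re)) := by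
          rw [norm_g]
          gcongr
          simpa [abs_of_nonneg hw] using hA (w * Complex.I)
      _ = A := by rw [mul_left_comm, ← Real.exp_add, neg_add_cancel, Real.exp_zero, mul_one]
  have g_diff : Differentiable ℂ g := by fun_prop
  have g_isBigO : g =O[Bornology.cobounded ℂ ⊓ 𝓟 {w | 0 < w.re}]
      fun w ↦ Real.exp (0 * ‖w‖ ^ (0 : ℝ)) := by
    refine Asymptotics.IsBigO.of_bound A (mem_inf_of_right ?_)
    filter_upwards [mem_principal_self _] with w hw
    simpa using g_le hw.le
  have g_axis (x : ℝ) : ‖g (x * Complex.I)‖ ≤ B := by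
    have hx : (x : ℂ) * Complex.I * Complex.I = ((-x : ℝ) : ℂ) := by
      rw [mul_assoc, Complex.I_mul_I]
      simp
    simpa [norm_g, hx] using hB (-x)
  have bounded_real : IsBoundedUnder (· ≤ ·) atTop fun x : ℝ ↦ ‖g x‖ :=
    ⟨A, eventually_map.2 <| (eventually_ge_atTop 0).mono fun x hx ↦ g_le (by simpa using hx)⟩
  have main := PhragmenLindelof.right_half_plane_of_bounded_on_real g_diff.diffContOnCl
    ⟨0, two_pos, 0, g_isBigO⟩ bounded_real g_axis (z := -Complex.I * z) (by simpa using hz)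
  have rotate : -Complex.I * z * Complex.I = z := by
    rw [mul_right_comm, neg_mul, Complex.I_mul_I, neg_neg, one_mul]
  rw [norm_g, rotate] at main
  simpa [← div_eq_inv_mul, div_le_iff₀ (Real.exp_pos _), Real.exp_neg] using main

lemma norm_le_mul_exp_abs_im (hf : Differentiable ℂ f)
    (hA : ∀ z, ‖f z‖ ≤ A * Real.exp (σ * |z.im|)) (hB : ∀ x : ℝ, ‖f x‖ ≤ B) (z : ℂ) :
    ‖f z‖ ≤ B * Real.exp (σ * |z.im|) := by
  rcases le_total 0 z.im with hz | hz
  · simpa [abs_of_nonneg hz] using norm_le_mul_exp_im_of_im_nonneg hf hA hB hz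
  · simpa [abs_of_nonpos hz] using norm_le_mul_exp_im_of_im_nonneg (f := fun w ↦ f (-w))
      (hf.comp differentiable_neg) (fun w ↦ by simpa using hA (-w))
      (fun x ↦ by simpa using hB (-x)) (z := -z) (by simpa using hz)

lemma norm_deriv_le_of_exponential_type (hσ : 0 < σ) (hf : Differentiable ℂ f)
    (hA : ∀ z, ‖f z‖ ≤ A * Real.exp (σ * |z.im|)) (hB : ∀ x : ℝ, ‖f x‖ ≤ B) (x : ℝ) :
    ‖deriv f x‖ ≤ 3 * σ * B := by
  have hB0 : 0 ≤ B := (norm_nonneg _).trans (hB 0)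
  have on_sphere : ∀ z ∈ Metric.sphere (x : ℂ) σ⁻¹, ‖f z‖ ≤ B * Real.exp 1 := by
    intro z hz
    have him : |z.im| ≤ σ⁻¹ := by
      simpa [← dist_eq_norm, Metric.mem_sphere.1 hz] using Complex.abs_im_le_norm (z - x)
    refine (norm_le_mul_exp_abs_im hf hA hB z).trans ?_
    gcongr
    simpa [hσ.ne'] using mul_le_mul_of_nonneg_left him hσ.le
  calc ‖deriv f x‖ ≤ B * Real.exp 1 / σ⁻¹ :=
        Complex.norm_deriv_le_of_forall_mem_sphere_norm_le (inv_pos.2 hσ) hf.diffContOnCl on_sphere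
    _ = Real.exp 1 * σ * B := by rw [div_inv_eq_mul]; ring
    _ ≤ 3 * σ * B := by gcongr; exact Real.exp_one_lt_three.le

lemma norm_complex_sin_le (z : ℂ) : ‖Complex.sin z‖ ≤ Real.exp |z.im| := by
  have h₁ : ‖Complex.exp (-z * Complex.I)‖ ≤ Real.exp |z.im| := by
    simpa [Complex.norm_exp] using le_abs_self z.im
  have h₂ : ‖Complex.exp (z * Complex.I)‖ ≤ Real.exp |z.im| := by
    simpa [Complex.norm_exp] using neg_le_abs z.im
  have h := norm_sub_le (Complex.exp (-z * Complex.I)) (Complex.exp (z * Complex.I))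
  rw [Complex.sin, norm_div, norm_mul, Complex.norm_I, mul_one, Complex.norm_two,
    div_le_iff₀ two_pos]
  linarith

lemma norm_eval_complex_sin_le {Q : ℂ[X]} {m : ℕ} (hQ : Q.natDegree ≤ m) (z : ℂ) :
    ‖Q.eval (Complex.sin z)‖ ≤
      (∑ j ∈ Finset.range (m + 1), ‖Q.coeff j‖) * Real.exp (m * |z.im|) := by
  rw [Q.eval_eq_sum_range' (Nat.lt_succ_of_le hQ), Finset.sum_mul]
  refine norm_sum_le_of_le _ fun j hj ↦ ?_
  rw [norm_mul, norm_pow]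
  gcongr
  calc ‖Complex.sin z‖ ^ j ≤ Real.exp |z.im| ^ j := by gcongr; exact norm_complex_sin_le z
    _ = Real.exp (j * |z.im|) := (Real.exp_nat_mul _ _).symm
    _ ≤ Real.exp (m * |z.im|) := by gcongr; exact Finset.mem_range_succ_iff.1 hj

theorem abs_eval_sin_sub_eval_sin_le {Q : ℝ[X]} {m : ℕ} (hm : 0 < m) (hQ : Q.natDegree ≤ m)
    (hB : ∀ θ : ℝ, |Q.eval (Real.sin θ)| ≤ B) (a b : ℝ) :
    |Q.eval (Real.sin b) - Q.eval (Real.sin a)| ≤ 3 * m * B * |b - a| := by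
  set Qc : ℂ[X] := Q.map Complex.ofRealHom
  have eval_real (x : ℝ) : Qc.eval (Complex.sin x) = ((Q.eval (Real.sin x) : ℝ) : ℂ) := by
    rw [← Complex.ofReal_sin]
    exact Polynomial.eval_map_apply Complex.ofRealHom (Real.sin x)
  have hdiff : Differentiable ℂ fun z ↦ Qc.eval (Complex.sin z) :=
    Qc.differentiable.comp Complex.differentiable_sin
  have hderiv (x : ℝ) := norm_deriv_le_of_exponential_type (Nat.cast_pos.2 hm) hdiff
    (norm_eval_complex_sin_le (natDegree_map_le.trans hQ))
    (fun t ↦ by simpa [eval_real] using hB t) x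
  have lipschitz := Convex.norm_image_sub_le_of_norm_hasDerivWithin_le (s := univ)
    (fun (x : ℝ) _ ↦ (hdiff x).hasDerivAt.comp_ofReal.hasDerivWithinAt) (fun x _ ↦ hderiv x)
    convex_univ (mem_univ a) (mem_univ b)
  simpa only [eval_real, ← Complex.ofReal_sub, Complex.norm_real, Real.norm_eq_abs] using lipschitz

end Bernstein

/-! ### Polynomials cannot follow a jump -/

section Jump

open Polynomial Real

variable {g s : ℝ → ℝ} {L R : ℝ}

lemma exists_Ioo_half_le_abs_sub_of_large {θ₀ : ℝ} (hLR : L ≤ R) (hθ₀ : θ₀ ∈ Icc (-R) R)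
    (hs : ∀ θ, |s θ| ≤ 1) (hg₀ : 4 ≤ |g θ₀|)
    (hg : ∀ θ, |θ - θ₀| ≤ L → |g θ - g θ₀| ≤ |g θ₀| / 16) :
    ∃ a, Ioo a (a + L) ⊆ Ioo (-R) R ∧ ∀ θ ∈ Ioo a (a + L), 1 / 2 ≤ |s θ - g θ| := by
  have near (θ : ℝ) (hθ : |θ - θ₀| ≤ L) : 1 / 2 ≤ |s θ - g θ| := by
    have h₁ := abs_sub_abs_le_abs_sub (g θ₀) (g θ)
    have h₂ := abs_sub_abs_le_abs_sub (g θ) (s θ)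
    rw [abs_sub_comm] at h₁ h₂
    linarith [hg θ hθ, hs θ]
  rcases le_total θ₀ 0 with h₀ | h₀
  · refine ⟨θ₀, Ioo_subset_Ioo hθ₀.1 (by linarith), fun θ hθ ↦ near θ ?_⟩
    rw [abs_le]
    constructor <;> linarith [hθ.1, hθ.2]
  · refine ⟨θ₀ - L, Ioo_subset_Ioo (by linarith) (by linarith [hθ₀.2]), fun θ hθ ↦ near θ ?_⟩
    rw [abs_le]
    constructor <;> linarith [hθ.1, hθ.2]

lemma exists_Ioo_half_le_abs_sub_of_small (hL : 0 ≤ L) (hLR : L ≤ R)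
    (hpos : ∀ θ ∈ Ioo 0 L, 3 / 4 ≤ s θ) (hneg : ∀ θ ∈ Ioo (-L) 0, s θ ≤ -(3 / 4))
    (hg : ∀ θ, |θ| ≤ L → |g θ - g 0| ≤ 1 / 4) :
    ∃ a, Ioo a (a + L) ⊆ Ioo (-R) R ∧ ∀ θ ∈ Ioo a (a + L), 1 / 2 ≤ |s θ - g θ| := by
  rcases le_total (g 0) 0 with h₀ | h₀
  · refine ⟨0, Ioo_subset_Ioo (by linarith) (by linarith), fun θ hθ ↦ ?_⟩
    rw [zero_add] at hθ
    have hgθ := (abs_le.1 (hg θ (by rw [abs_of_pos hθ.1]; exact hθ.2.le))).2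
    linarith [hpos θ hθ, le_abs_self (s θ - g θ)]
  · refine ⟨-L, Ioo_subset_Ioo (by linarith) (by linarith), fun θ hθ ↦ ?_⟩
    rw [neg_add_cancel] at hθ
    have hgθ := (abs_le.1 (hg θ (by rw [abs_of_neg hθ.2]; linarith [hθ.1]))).1
    linarith [hneg θ hθ, neg_le_abs (s θ - g θ)]

lemma exists_forall_abs_eval_sin_le (Q : ℝ[X]) :
    ∃ θ₀ ∈ Icc (-(π / 2)) (π / 2), ∀ θ, |Q.eval (sin θ)| ≤ |Q.eval (sin θ₀)| := by
  have hcont : Continuous fun θ ↦ |Q.eval (sin θ)| := by fun_prop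
  obtain ⟨θ₀, hθ₀, hmax⟩ := isCompact_Icc.exists_isMaxOn
    (nonempty_Icc.2 (by linarith [pi_pos] : -(π / 2) ≤ π / 2)) hcont.continuousOn
  refine ⟨θ₀, hθ₀, fun θ ↦ ?_⟩
  simpa [sin_arcsin (neg_one_le_sin θ) (sin_le_one θ)] using
    isMaxOn_iff.1 hmax (arcsin (sin θ)) (arcsin_mem_Icc _)

-- At angular scale `1 / m` a polynomial varies by a small fraction of its maximum: if that
-- maximum is large the polynomial exceeds `s` near it, otherwise it misses one side of the jump.
theorem exists_Ioo_half_le_abs_sub_eval_sin {Q : ℝ[X]} {m : ℕ} (hm : 0 < m)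
    (hQ : Q.natDegree ≤ m) (hs : ∀ θ, |s θ| ≤ 1)
    (hpos : ∀ θ ∈ Ioo 0 (1 / (48 * m : ℝ)), 3 / 4 ≤ s θ)
    (hneg : ∀ θ ∈ Ioo (-(1 / (48 * m : ℝ))) 0, s θ ≤ -(3 / 4)) :
    ∃ a : ℝ, Ioo a (a + 1 / (48 * m)) ⊆ Ioo (-(π / 2)) (π / 2) ∧
      ∀ θ ∈ Ioo a (a + 1 / (48 * m)), 1 / 2 ≤ |s θ - Q.eval (sin θ)| := by
  have hm1 : (1 : ℝ) ≤ m := by exact_mod_cast hm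
  have hL : 1 / (48 * m : ℝ) ≤ π / 2 := by
    rw [div_le_div_iff₀ (by positivity) two_pos]
    nlinarith [pi_gt_three]
  obtain ⟨θ₀, hθ₀, hmax⟩ := exists_forall_abs_eval_sin_le Q
  have slow (a b : ℝ) (hab : |b - a| ≤ 1 / (48 * m)) :
      |Q.eval (sin b) - Q.eval (sin a)| ≤ |Q.eval (sin θ₀)| / 16 := by
    calc |Q.eval (sin b) - Q.eval (sin a)| ≤ 3 * m * |Q.eval (sin θ₀)| * |b - a| :=
          abs_eval_sin_sub_eval_sin_le hm hQ hmax a b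
      _ ≤ 3 * m * |Q.eval (sin θ₀)| * (1 / (48 * m)) := by gcongr
      _ = |Q.eval (sin θ₀)| / 16 := by field_simp; ring
  rcases le_or_gt 4 |Q.eval (sin θ₀)| with hlarge | hsmall
  · exact exists_Ioo_half_le_abs_sub_of_large (g := fun θ ↦ Q.eval (sin θ)) hL hθ₀ hs hlarge
      (slow θ₀)
  · exact exists_Ioo_half_le_abs_sub_of_small (g := fun θ ↦ Q.eval (sin θ)) (by positivity) hL
      hpos hneg fun θ hθ ↦ (slow 0 θ (by simpa using hθ)).trans (by linarith)

lemma three_quarters_le_cos_sq_pow {k m : ℕ} (hm : 0 < m) (hkm : k ≤ m) {θ : ℝ}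
    (hθ : |θ| ≤ 1 / (48 * m)) : 3 / 4 ≤ (cos θ ^ 2) ^ k := by
  have hm1 : (1 : ℝ) ≤ m := by exact_mod_cast hm
  have hkθ : (k : ℝ) * θ ^ 2 ≤ 1 / 48 := by
    calc (k : ℝ) * θ ^ 2 ≤ m * (1 / (48 * m) : ℝ) ^ 2 := by rw [← sq_abs θ]; gcongr
      _ = 1 / 48 * (1 / (48 * m) : ℝ) := by field_simp
      _ ≤ 1 / 48 * 1 := by gcongr; rw [div_le_one (by positivity)]; linarith
      _ = 1 / 48 := mul_one _
  have hθ1 : θ ^ 2 ≤ 1 := by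
    refine (sq_le_one_iff_abs_le_one θ).2 (hθ.trans ?_)
    rw [div_le_one (by positivity)]
    linarith
  calc (3 / 4 : ℝ) ≤ 1 + k * (-θ ^ 2) := by linarith
    _ ≤ (1 + -θ ^ 2) ^ k := one_add_mul_le_pow (by linarith) k
    _ ≤ (cos θ ^ 2) ^ k := by
        gcongr
        · linarith
        · rw [cos_sq']
          linarith [sq_le_sq.2 (abs_sin_le_abs (x := θ))]

theorem exists_Ioo_half_le_abs_sign_sub_eval_sin {P : ℝ[X]} {n : ℕ} (hn : 0 < n)
    (hP : P.natDegree ≤ n) (k : ℕ) :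
    ∃ a : ℝ, Ioo a (a + 1 / (48 * (n + 2 * k))) ⊆ Ioo (-(π / 2)) (π / 2) ∧
      ∀ θ ∈ Ioo a (a + 1 / (48 * (n + 2 * k))),
        1 / 2 ≤ |Real.sign (sin θ) - P.eval (sin θ)| * (cos θ ^ 2) ^ k := by
  have hm : 0 < n + 2 * k := by omega
  have hL : 1 / (48 * (n + 2 * k : ℕ) : ℝ) < π := by
    refine lt_of_le_of_lt ?_ (by linarith [pi_gt_three] : (1 : ℝ) < π)
    rw [div_le_one (by positivity)]
    exact_mod_cast (by omega : 1 ≤ 48 * (n + 2 * k))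
  have hcos {θ : ℝ} (hθ : |θ| ≤ 1 / (48 * (n + 2 * k : ℕ))) : 3 / 4 ≤ (cos θ ^ 2) ^ k :=
    three_quarters_le_cos_sq_pow hm (by omega) hθ
  have hdeg : (P * (1 - X ^ 2) ^ k).natDegree ≤ n + 2 * k := by
    have hX : (1 - X ^ 2 : ℝ[X]).natDegree ≤ 2 := by compute_degree
    calc (P * (1 - X ^ 2) ^ k).natDegree ≤ n + k * 2 :=
          natDegree_mul_le_of_le hP (natDegree_pow_le_of_le k hX)
      _ = n + 2 * k := by rw [mul_comm]
  obtain ⟨a, ha, hjump⟩ := exists_Ioo_half_le_abs_sub_eval_sin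
    (s := fun θ ↦ Real.sign (sin θ) * (cos θ ^ 2) ^ k) hm hdeg (fun θ ↦ by
      rw [abs_mul, abs_of_nonneg (by positivity : 0 ≤ (cos θ ^ 2) ^ k)]
      refine mul_le_one₀ ?_ (by positivity) (pow_le_one₀ (by positivity) (cos_sq_le_one θ))
      rcases sign_apply_eq (sin θ) with h | h | h <;> simp [h])
    (fun θ hθ ↦ by
      rw [sign_of_pos (sin_pos_of_pos_of_lt_pi hθ.1 (hθ.2.trans hL)), one_mul]
      exact hcos (by rw [abs_of_pos hθ.1]; exact hθ.2.le))
    (fun θ hθ ↦ by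
      rw [sign_of_neg (sin_neg_of_neg_of_neg_pi_lt hθ.2 (by linarith [hθ.1])), neg_one_mul]
      exact neg_le_neg (hcos (by rw [abs_of_neg hθ.2]; linarith [hθ.1])))
  push_cast at ha hjump
  refine ⟨a, ha, fun θ hθ ↦ (hjump θ hθ).trans_eq ?_⟩
  have heval : (P * (1 - X ^ 2) ^ k).eval (sin θ) = P.eval (sin θ) * (cos θ ^ 2) ^ k := by
    simp [cos_sq']
  rw [heval, ← sub_mul, abs_mul, abs_of_nonneg (by positivity : 0 ≤ (cos θ ^ 2) ^ k)]

end Jump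

/-! ### The lower bound -/

section LowerBound

open Polynomial Real

variable {α β : ℝ}

lemma real_sign_monotone : Monotone Real.sign := by
  intro x y hxy
  unfold Real.sign
  split_ifs <;> linarith

lemma mem_MSet_one_iff {f : ℝ → ℝ} : f ∈ MSet 1 ↔ MonotoneOn f (Ioo (-1) 1) := by
  have erase_zero : Finset.univ.erase (0 : Fin 2) = {1} := by decide
  have erase_one : Finset.univ.erase (1 : Fin 2) = {0} := by decide
  have divided_difference (u v : ℝ) :
      f u / (u - v) + f v / (v - u) = (f v - f u) / (v - u) := by
    rw [← neg_sub v u, div_neg, sub_div]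
    ring
  simp only [MSet, kMonotoneOn, mem_ofPred_eq, Nat.reduceAdd, Fin.sum_univ_two, erase_zero,
    erase_one, Finset.prod_singleton, divided_difference]
  constructor
  · intro h u hu v hv huv
    rcases huv.eq_or_lt with rfl | hlt
    · rfl
    have hdiv := h ![u, v] (by simpa [Fin.cons_injective_iff] using hlt.ne)
      (by simp [Fin.forall_fin_two, hu.1, hu.2, hv.1, hv.2])
    simpa [div_nonneg_iff, hlt, not_le.2 hlt, huv] using hdiv
  · intro h x hx hmem
    rcases lt_or_gt_of_ne (hx.ne (by decide : (0 : Fin 2) ≠ 1)) with hlt | hlt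
    · exact div_nonneg (sub_nonneg.2 (h (hmem 0) (hmem 1) hlt.le)) (sub_nonneg.2 hlt.le)
    · exact div_nonneg_of_nonpos (sub_nonpos.2 (h (hmem 1) (hmem 0) hlt.le))
        (sub_nonpos.2 hlt.le)

lemma LpOn_eq_lintegral {p : ℝ≥0∞} (hp₀ : p ≠ 0) (hp : p ≠ ∞) (g : ℝ → ℝ) (a b : ℝ) :
    LpOn g p a b = (∫⁻ x in Icc a b, ENNReal.ofReal (|g x| ^ p.toReal)) ^ (1 / p.toReal) := by
  rw [LpOn, eLpNorm_eq_lintegral_rpow_enorm_toReal hp₀ hp]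
  simp only [Real.enorm_eq_ofReal_abs,
    ENNReal.ofReal_rpow_of_nonneg (abs_nonneg _) ENNReal.toReal_nonneg]

lemma LpOn_const_mul {A : ℝ} (hA : 0 ≤ A) (g : ℝ → ℝ) (p : ℝ≥0∞) (a b : ℝ) :
    LpOn (fun x ↦ A * g x) p a b = ENNReal.ofReal A * LpOn g p a b := by
  rw [← Real.enorm_eq_ofReal hA]
  exact eLpNorm_const_smul A g p _

lemma ofReal_mul_En_le {A : ℝ} (hA : 0 < A) (n : ℕ) (f wt : ℝ → ℝ) (p : ℝ≥0∞) :
    ENNReal.ofReal A * En n f wt p ≤ En n (fun x ↦ A * f x) wt p := by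
  refine le_iInf₂ fun P hP ↦ ?_
  have rescale : (fun x ↦ wt x * (A * f x - P.eval x)) =
      fun x ↦ A * (wt x * (f x - (C A⁻¹ * P).eval x)) := by
    funext x
    rw [eval_mul, eval_C]
    field_simp
  rw [rescale, LpOn_const_mul hA.le]
  gcongr
  exact iInf₂_le (C A⁻¹ * P) ((natDegree_C_mul_le _ _).trans hP)

lemma jacobi_nonneg {x : ℝ} (hx : x ∈ Icc (-1) 1) : 0 ≤ jacobi α β x :=
  mul_nonneg (rpow_nonneg (by linarith [hx.1]) _) (rpow_nonneg (by linarith [hx.2]) _)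

lemma continuous_jacobi (hα : 0 ≤ α) (hβ : 0 ≤ β) : Continuous (jacobi α β) :=
  ((continuous_const.add continuous_id).rpow_const fun _ ↦ Or.inr hα).mul
    ((continuous_const.sub continuous_id).rpow_const fun _ ↦ Or.inr hβ)

lemma half_cos_sq_rpow_le_jacobi_sin (hα : 0 ≤ α) (hβ : 0 ≤ β) {θ : ℝ} (hθ : 0 < cos θ) :
    (cos θ ^ 2 / 2) ^ (α + β) ≤ jacobi α β (sin θ) := by
  have factor : cos θ ^ 2 = (1 + sin θ) * (1 - sin θ) := by rw [cos_sq']; ring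
  have h₁ := neg_one_le_sin θ
  have h₂ := sin_le_one θ
  rw [rpow_add (by positivity), jacobi]
  gcongr
  · exact rpow_nonneg (by linarith) _
  · rw [factor]; nlinarith
  · rw [factor]; nlinarith

lemma le_cos_mul_rpow_abs_jacobi_mul {p D θ : ℝ} {k : ℕ} (hp : 0 < p) (hα : 0 ≤ α) (hβ : 0 ≤ β)
    (hk : α + β + p⁻¹ ≤ k) (hθ : 0 < cos θ) (hD : 1 / 2 ≤ |D| * (cos θ ^ 2) ^ k) :
    ((1 / 2) ^ (α + β) * (1 / 2)) ^ p ≤ |cos θ| * |jacobi α β (sin θ) * D| ^ p := by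
  have hkp : 1 + 2 * ((α + β) * p) ≤ 2 * (k * p) := by
    have := mul_le_mul_of_nonneg_right hk hp.le
    rw [add_mul, inv_mul_cancel₀ hp.ne'] at this
    linarith
  have absorb : ((cos θ ^ 2) ^ k) ^ p ≤ cos θ * ((cos θ ^ 2) ^ (α + β)) ^ p := by
    have e₁ : ((cos θ ^ 2) ^ k) ^ p = cos θ ^ (2 * (k * p)) := by
      rw [← rpow_natCast _ k, ← rpow_natCast _ 2, ← rpow_mul hθ.le, ← rpow_mul hθ.le, mul_assoc,
        Nat.cast_two]
    have e₂ : cos θ * ((cos θ ^ 2) ^ (α + β)) ^ p = cos θ ^ (1 + 2 * ((α + β) * p)) := by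
      rw [rpow_add hθ, rpow_one, ← rpow_natCast _ 2, ← rpow_mul hθ.le, ← rpow_mul hθ.le,
        mul_assoc, Nat.cast_two]
    rw [e₁, e₂]
    exact rpow_le_rpow_of_exponent_ge hθ (cos_le_one θ) hkp
  have hj : 0 ≤ jacobi α β (sin θ) := jacobi_nonneg ⟨neg_one_le_sin θ, sin_le_one θ⟩
  rw [abs_mul, abs_of_pos hθ, abs_of_nonneg hj]
  calc ((1 / 2) ^ (α + β) * (1 / 2)) ^ p
      ≤ ((1 / 2) ^ (α + β) * (|D| * (cos θ ^ 2) ^ k)) ^ p := by gcongr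
    _ = ((1 / 2) ^ (α + β) * |D|) ^ p * ((cos θ ^ 2) ^ k) ^ p := by
        rw [← mul_assoc, mul_rpow (by positivity) (by positivity)]
    _ ≤ ((1 / 2) ^ (α + β) * |D|) ^ p * (cos θ * ((cos θ ^ 2) ^ (α + β)) ^ p) := by gcongr
    _ = cos θ * ((cos θ ^ 2 / 2) ^ (α + β) * |D|) ^ p := by
        rw [div_eq_mul_one_div (cos θ ^ 2) 2, mul_rpow (z := α + β) (sq_nonneg _) (by norm_num),
          mul_left_comm, ← mul_rpow (by positivity) (by positivity), mul_right_comm,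
          mul_comm ((cos θ ^ 2) ^ (α + β))]
    _ ≤ cos θ * (jacobi α β (sin θ) * |D|) ^ p := by
        gcongr
        exact half_cos_sq_rpow_le_jacobi_sin hα hβ hθ

lemma exists_pos_le_lintegral_jacobi_sign_sub {p : ℝ} (hp : 0 < p) (hα : 0 ≤ α) (hβ : 0 ≤ β) :
    ∃ c > (0 : ℝ), ∀ n : ℕ, 1 ≤ n → ∀ P : ℝ[X], P.natDegree ≤ n →
      ENNReal.ofReal (c / n) ≤
        ∫⁻ x in Icc (-1) 1, ENNReal.ofReal (|jacobi α β x * (Real.sign x - P.eval x)| ^ p) := by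
  obtain ⟨k, hk⟩ := exists_nat_ge (α + β + p⁻¹)
  set A : ℝ := ((1 / 2) ^ (α + β) * (1 / 2)) ^ p
  refine ⟨A * (1 / (48 * (1 + 2 * k))), by positivity, fun n hn P hP ↦ ?_⟩
  have hn1 : (1 : ℝ) ≤ n := by exact_mod_cast hn
  obtain ⟨a, ha, hjump⟩ := exists_Ioo_half_le_abs_sign_sub_eval_sin hn hP k
  set I := Ioo a (a + 1 / (48 * (n + 2 * k)))
  have hinj : InjOn sin I := injOn_sin.mono (ha.trans Ioo_subset_Icc_self)
  calc ENNReal.ofReal (A * (1 / (48 * (1 + 2 * k))) / n)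
      ≤ ENNReal.ofReal A * volume I := by
        rw [volume_Ioo, add_sub_cancel_left, ← ENNReal.ofReal_mul (by positivity), mul_div_assoc,
          div_div]
        refine ENNReal.ofReal_le_ofReal <| mul_le_mul_of_nonneg_left
          (one_div_le_one_div_of_le (by positivity) ?_) (by positivity)
        nlinarith [(Nat.cast_nonneg k : (0 : ℝ) ≤ k)]
    _ = ∫⁻ _ in I, ENNReal.ofReal A := (setLIntegral_const _ _).symm
    _ ≤ ∫⁻ t in I, ENNReal.ofReal |cos t| *
          ENNReal.ofReal (|jacobi α β (sin t) * (Real.sign (sin t) - P.eval (sin t))| ^ p) :=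
        setLIntegral_mono' measurableSet_Ioo fun t ht ↦ by
          rw [← ENNReal.ofReal_mul (abs_nonneg _)]
          exact ENNReal.ofReal_le_ofReal <| le_cos_mul_rpow_abs_jacobi_mul hp hα hβ hk
            (cos_pos_of_mem_Ioo (ha ht)) (hjump t ht)
    _ = ∫⁻ x in sin '' I, ENNReal.ofReal (|jacobi α β x * (Real.sign x - P.eval x)| ^ p) :=
        (lintegral_image_eq_lintegral_abs_deriv_mul measurableSet_Ioo
          (fun x _ ↦ (hasDerivAt_sin x).hasDerivWithinAt) hinj
          (fun x ↦ ENNReal.ofReal (|jacobi α β x * (Real.sign x - P.eval x)| ^ p))).symm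
    _ ≤ ∫⁻ x in Icc (-1) 1, ENNReal.ofReal (|jacobi α β x * (Real.sign x - P.eval x)| ^ p) :=
        lintegral_mono_set (image_subset_iff.2 fun t _ ↦ ⟨neg_one_le_sin t, sin_le_one t⟩)

lemma exists_pos_le_LpOn_jacobi_sign_sub {q : ℝ≥0∞} (hq₀ : q ≠ 0) (hq : q ≠ ∞) (hα : 0 ≤ α)
    (hβ : 0 ≤ β) :
    ∃ c > (0 : ℝ), ∀ n : ℕ, 1 ≤ n → ∀ P : ℝ[X], P.natDegree ≤ n →
      ENNReal.ofReal (c * (n : ℝ) ^ (-(1 / q.toReal))) ≤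
        LpOn (fun x ↦ jacobi α β x * (Real.sign x - P.eval x)) q (-1) 1 := by
  obtain ⟨c, hc, hintegral⟩ :=
    exists_pos_le_lintegral_jacobi_sign_sub (ENNReal.toReal_pos hq₀ hq) hα hβ
  refine ⟨c ^ (1 / q.toReal), by positivity, fun n hn P hP ↦ ?_⟩
  rw [LpOn_eq_lintegral hq₀ hq, rpow_neg (by positivity), ← div_eq_mul_inv,
    ← div_rpow hc.le (by positivity),
    ← ENNReal.ofReal_rpow_of_nonneg (by positivity) (by positivity)]
  exact ENNReal.rpow_le_rpow (hintegral n hn P hP) (by positivity)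

lemma LpOn_jacobi_mul_sign_ne_top (hα : 0 ≤ α) (hβ : 0 ≤ β) (p : ℝ≥0∞) :
    LpOn (fun x ↦ jacobi α β x * Real.sign x) p (-1) 1 ≠ ∞ := by
  obtain ⟨C, hC⟩ := isCompact_Icc.exists_bound_of_continuousOn
    (continuous_jacobi hα hβ).continuousOn (s := Icc (-1) 1)
  refine (MemLp.of_bound ?_ C ?_).eLpNorm_ne_top
  · exact ((continuous_jacobi hα hβ).measurable.mul
      real_sign_monotone.measurable).aestronglyMeasurable
  · filter_upwards [ae_restrict_mem measurableSet_Icc] with x hx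
    refine le_trans ?_ (hC x hx)
    rcases sign_apply_eq x with h | h | h <;> simp [h]

lemma LpOn_jacobi_mul_sign_ne_zero {p : ℝ≥0∞} (hp₀ : p ≠ 0) (hp : p ≠ ∞) (hα : 0 ≤ α)
    (hβ : 0 ≤ β) : LpOn (fun x ↦ jacobi α β x * Real.sign x) p (-1) 1 ≠ 0 := by
  obtain ⟨c, hc, hle⟩ := exists_pos_le_LpOn_jacobi_sign_sub hp₀ hp hα hβ
  have hpos : 0 < ENNReal.ofReal (c * ((1 : ℕ) : ℝ) ^ (-(1 / p.toReal))) := by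
    rw [ENNReal.ofReal_pos]
    positivity
  simpa using (hpos.trans_le (hle 1 le_rfl 0 (by simp))).ne'

theorem exists_pos_le_EClass_monotone {p q : ℝ≥0∞} (hp₀ : p ≠ 0) (hp : p ≠ ∞) (hq₀ : q ≠ 0)
    (hq : q ≠ ∞) (hα : 0 ≤ α) (hβ : 0 ≤ β) :
    ∃ c > (0 : ℝ), ∀ n : ℕ, 1 ≤ n → ENNReal.ofReal (c * (n : ℝ) ^ (-(1 / q.toReal))) ≤
      EClass (MSet 1 ∩ BSet p α β) n (jacobi α β) q := by
  set N := LpOn (fun x ↦ jacobi α β x * Real.sign x) p (-1) 1 with hN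
  have hN₀ : N ≠ 0 := LpOn_jacobi_mul_sign_ne_zero hp₀ hp hα hβ
  have hN_top : N ≠ ∞ := LpOn_jacobi_mul_sign_ne_top hα hβ p
  have hA : 0 < N.toReal⁻¹ := inv_pos.2 (ENNReal.toReal_pos hN₀ hN_top)
  obtain ⟨c, hc, hle⟩ := exists_pos_le_LpOn_jacobi_sign_sub hq₀ hq hα hβ
  have hmem : (fun x ↦ N.toReal⁻¹ * Real.sign x) ∈ MSet 1 ∩ BSet p α β := by
    have hmono := real_sign_monotone.const_mul hA.le
    refine ⟨mem_MSet_one_iff.2 (hmono.monotoneOn _), hmono.measurable, ?_⟩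
    simp only [mul_left_comm (jacobi α β _)]
    rw [LpOn_const_mul hA.le, ← hN, ENNReal.ofReal_inv_of_pos (inv_pos.1 hA),
      ENNReal.ofReal_toReal hN_top, ENNReal.inv_mul_cancel hN₀ hN_top]
  refine ⟨N.toReal⁻¹ * c, mul_pos hA hc, fun n hn ↦ ?_⟩
  calc ENNReal.ofReal (N.toReal⁻¹ * c * (n : ℝ) ^ (-(1 / q.toReal)))
      = ENNReal.ofReal N.toReal⁻¹ * ENNReal.ofReal (c * (n : ℝ) ^ (-(1 / q.toReal))) := by
        rw [mul_assoc, ENNReal.ofReal_mul hA.le]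
    _ ≤ ENNReal.ofReal N.toReal⁻¹ * En n Real.sign (jacobi α β) q := by
        gcongr
        exact le_iInf₂ (hle n hn)
    _ ≤ En n (fun x ↦ N.toReal⁻¹ * Real.sign x) (jacobi α β) q := ofReal_mul_En_le hA n _ _ q
    _ ≤ EClass (MSet 1 ∩ BSet p α β) n (jacobi α β) q :=
        le_iSup₂_of_le (f := fun f _ ↦ En n f (jacobi α β) q) _ hmem le_rfl

end LowerBound

/-! ### Positive polynomial kernels concentrated at the Chebyshev nodes -/

section Kernel

open Polynomial Polynomial.Chebyshev Real

lemma exists_eq_sum_smul_chebyshev {n : ℕ} {Q : ℝ[X]} (hQ : Q.natDegree ≤ n) :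
    ∃ c : ℕ → ℝ, ∑ k ∈ Finset.range (n + 1), c k • T ℝ k = Q := by
  have hmem : Q ∈ degreeLT ℝ (n + 1) := by
    rw [mem_degreeLT, degree_lt_iff_coeff_zero]
    exact fun m hm ↦ coeff_eq_zero_of_natDegree_lt (by omega)
  rw [← Sequence.span_degreeLT (chebyshevTsequence ℝ) (by simp),
    show Set.Iio (n + 1) = Finset.range (n + 1) by simp,
    Submodule.mem_span_image_finset_iff_exists_fun'] at hmem
  exact hmem

lemma exists_eval_cos_eq_eval_cos_sub_add {n : ℕ} {Q : ℝ[X]} (hQ : Q.natDegree ≤ n) (s : ℝ) :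
    ∃ P : ℝ[X], P.natDegree ≤ n ∧
      ∀ θ, P.eval (cos θ) = Q.eval (cos (θ - s)) + Q.eval (cos (θ + s)) := by
  obtain ⟨c, rfl⟩ := exists_eq_sum_smul_chebyshev hQ
  refine ⟨∑ k ∈ Finset.range (n + 1), (2 * c k * cos (k * s)) • T ℝ k, ?_, fun θ ↦ ?_⟩
  · refine natDegree_sum_le_of_forall_le _ _ fun k hk ↦ (natDegree_smul_le _ _).trans ?_
    simpa [natDegree_T] using Nat.lt_succ_iff.1 (Finset.mem_range.1 hk)
  · simp only [eval_finsetSum, eval_smul, smul_eq_mul, T_real_cos, ← Finset.sum_add_distrib]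
    refine Finset.sum_congr rfl fun k _ ↦ ?_
    simp only [mul_sub, mul_add, cos_add, cos_sub, Int.cast_natCast]
    ring

/-- The angle at position `t` on the grid dividing `[0, π]` into `M` equal parts. Integers `t` give
the division points and half-integers the zeros of the Chebyshev polynomial `T_M`. -/
def gridAngle (M : ℕ) (t : ℝ) : ℝ := t * (π / M)

lemma sum_cos_mul_gridAngle {M k : ℕ} (hk : k ≠ 0) (hkM : k < 2 * M) :
    ∑ j ∈ Finset.range M, cos (k * gridAngle M (j + 1 / 2)) = 0 := by
  have hM : (M : ℝ) ≠ 0 := by norm_cast; omega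
  have hdvd : ¬ (2 * M : ℤ) ∣ k := by
    exact_mod_cast Nat.not_dvd_of_pos_of_lt (Nat.pos_of_ne_zero hk) hkM
  have h := sumZeroes_T_of_not_dvd hdvd
  simp only [sumZeroes, T_real_cos] at h
  refine (Eq.congr_left (Finset.sum_congr rfl fun j _ ↦ ?_)).1
    ((mul_eq_zero_iff_left (div_ne_zero pi_ne_zero hM)).1 h)
  rw [gridAngle, Int.cast_natCast]
  field_simp

lemma exists_forall_sum_eval_cos_sub_add_eq {n M : ℕ} {Q : ℝ[X]} (hQ : Q.natDegree ≤ n)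
    (hM : n < 2 * M) :
    ∃ S : ℝ, ∀ θ, ∑ j ∈ Finset.range M, (Q.eval (cos (θ - gridAngle M (j + 1 / 2))) +
      Q.eval (cos (θ + gridAngle M (j + 1 / 2)))) = S := by
  obtain ⟨c, rfl⟩ := exists_eq_sum_smul_chebyshev hQ
  refine ⟨2 * c 0 * M, fun θ ↦ ?_⟩
  have hterm (j : ℕ) : (∑ k ∈ Finset.range (n + 1), c k • T ℝ k).eval
        (cos (θ - gridAngle M (j + 1 / 2))) +
      (∑ k ∈ Finset.range (n + 1), c k • T ℝ k).eval (cos (θ + gridAngle M (j + 1 / 2))) =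
      ∑ k ∈ Finset.range (n + 1),
        2 * c k * cos (k * θ) * cos (k * gridAngle M (j + 1 / 2)) := by
    simp only [eval_finsetSum, eval_smul, smul_eq_mul, T_real_cos, ← Finset.sum_add_distrib]
    refine Finset.sum_congr rfl fun k _ ↦ ?_
    simp only [mul_sub, mul_add, cos_add, cos_sub, Int.cast_natCast]
    ring
  rw [Finset.sum_congr rfl fun j _ ↦ hterm j, Finset.sum_comm, Finset.sum_eq_single 0]
  · simp [mul_comm]
  · intro k hk hk₀
    rw [← Finset.mul_sum, sum_cos_mul_gridAngle hk₀ (by grind), mul_zero]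
  · simp

/-- The Fejér kernel `t ↦ |∑_{k<N} e^{ikt}|²` as a polynomial in `cos t`. -/
def fejerPoly (N : ℕ) : ℝ[X] :=
  ∑ k ∈ Finset.range N, ∑ l ∈ Finset.range N, T ℝ ((k : ℤ) - l)

lemma natDegree_fejerPoly_le {N n : ℕ} (h : N ≤ n + 1) : (fejerPoly N).natDegree ≤ n := by
  refine natDegree_sum_le_of_forall_le _ _ fun k hk ↦
    natDegree_sum_le_of_forall_le _ _ fun l hl ↦ ?_
  rw [natDegree_T]
  grind

lemma eval_cos_fejerPoly (N : ℕ) (t : ℝ) :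
    (fejerPoly N).eval (cos t) = ‖∑ k ∈ Finset.range N, Complex.exp (t * Complex.I) ^ k‖ ^ 2 := by
  have hexp (k : ℕ) : Complex.exp (t * Complex.I) ^ k =
      Complex.exp ((k * t : ℝ) * Complex.I) := by
    rw [← Complex.exp_nat_mul]
    push_cast
    ring_nf
  rw [← Complex.normSq_eq_norm_sq, Complex.normSq_apply, Complex.re_sum, Complex.im_sum]
  simp only [fejerPoly, eval_finsetSum, T_real_cos, hexp, Complex.exp_ofReal_mul_I_re,
    Complex.exp_ofReal_mul_I_im, Finset.sum_mul_sum, ← Finset.sum_add_distrib]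
  refine Finset.sum_congr rfl fun k _ ↦ Finset.sum_congr rfl fun l _ ↦ ?_
  rw [← cos_sub, ← sub_mul]
  push_cast
  rfl

lemma eval_cos_fejerPoly_nonneg (N : ℕ) (t : ℝ) : 0 ≤ (fejerPoly N).eval (cos t) := by
  rw [eval_cos_fejerPoly]
  positivity

lemma eval_one_fejerPoly (N : ℕ) : (fejerPoly N).eval 1 = (N : ℝ) ^ 2 := by
  simpa using eval_cos_fejerPoly N 0

lemma eval_cos_fejerPoly_le (N : ℕ) (t : ℝ) : (fejerPoly N).eval (cos t) ≤ (N : ℝ) ^ 2 := by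
  rw [eval_cos_fejerPoly]
  gcongr
  refine (norm_sum_le _ _).trans ?_
  simp [Complex.norm_exp_ofReal_mul_I]

lemma eval_cos_fejerPoly_mul_sin_sq_le_one (N : ℕ) (t : ℝ) :
    (fejerPoly N).eval (cos t) * sin (t / 2) ^ 2 ≤ 1 := by
  have hgeom := congrArg norm (geom_sum_mul (Complex.exp (t * Complex.I)) N)
  have htwo : ‖Complex.exp (t * Complex.I) ^ N - 1‖ ≤ 2 := by
    refine (norm_sub_le _ _).trans ?_
    rw [norm_pow, Complex.norm_exp_ofReal_mul_I]
    norm_num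
  rw [← hgeom, norm_mul, mul_comm (t : ℂ), Complex.norm_exp_I_mul_ofReal_sub_one, norm_mul,
    norm_ofNat, Real.norm_eq_abs, mul_comm Complex.I] at htwo
  rw [eval_cos_fejerPoly, ← sq_abs (sin _), ← mul_pow]
  exact pow_le_one₀ (by positivity) (by linarith)

lemma abs_sub_le_pi_mul_abs_sin_half_sub {θ s : ℝ} (hθ : θ ∈ Icc 0 π) (hs : s ∈ Icc 0 π) :
    |θ - s| ≤ π * |sin ((θ - s) / 2)| := by
  have h := mul_abs_le_abs_sin (x := (θ - s) / 2) (by grind)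
  rw [abs_div, abs_two, div_mul_div_comm, div_le_iff₀ (by positivity)] at h
  linarith

lemma abs_sub_le_pi_mul_abs_sin_half_add {θ s : ℝ} (hθ : θ ∈ Icc 0 π) (hs : s ∈ Icc 0 π) :
    |θ - s| ≤ π * |sin ((θ + s) / 2)| := by
  rcases le_total (θ + s) π with h | h
  · have := abs_sub_le_pi_mul_abs_sin_half_sub (θ := θ + s) (s := 0)
      ⟨add_nonneg hθ.1 hs.1, h⟩ ⟨le_rfl, pi_nonneg⟩
    rw [sub_zero] at this
    grind
  · have := abs_sub_le_pi_mul_abs_sin_half_sub (θ := 2 * π - (θ + s)) (s := 0) (by grind) (by grind)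
    rw [sub_zero, sub_div, mul_div_cancel_left₀ _ two_ne_zero, sin_pi_sub] at this
    grind

lemma one_add_abs_sub_le_four_mul_abs {i j : ℕ} (hij : i ≠ j) {M : ℕ} {θ : ℝ}
    (hθ : θ ∈ Icc (gridAngle M i) (gridAngle M (i + 1))) :
    (1 + |(i : ℝ) - j|) * (π / M) ≤ 4 * |θ - gridAngle M (j + 1 / 2)| := by
  have hstep : 0 ≤ π / M := by positivity
  obtain ⟨hlo, hhi⟩ := hθ
  simp only [gridAngle] at hlo hhi ⊢
  rcases Nat.lt_or_gt_of_ne hij with h | h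
  · have hij' : (i : ℝ) + 1 ≤ j := by exact_mod_cast h
    rw [abs_of_nonpos (by linarith)]
    refine le_trans ?_ (mul_le_mul_of_nonneg_left (neg_le_abs _) (by norm_num))
    nlinarith
  · have hij' : (j : ℝ) + 1 ≤ i := by exact_mod_cast h
    rw [abs_of_nonneg (by linarith)]
    refine le_trans ?_ (mul_le_mul_of_nonneg_left (le_abs_self _) (by norm_num))
    nlinarith

lemma eval_cos_fejerPoly_le_of_abs_le {N M i j : ℕ} (hM : M ≠ 0) (hN : N ≤ M) {θ t : ℝ}
    (hθ : θ ∈ Icc (gridAngle M i) (gridAngle M (i + 1)))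
    (ht : |θ - gridAngle M (j + 1 / 2)| ≤ π * |sin (t / 2)|) :
    (fejerPoly N).eval (cos t) ≤ (4 * M / (1 + |(i : ℝ) - j|)) ^ 2 := by
  rcases eq_or_ne i j with rfl | hij
  · have hNM : (N : ℝ) ≤ 4 * M := by norm_cast; omega
    simpa using (eval_cos_fejerPoly_le N t).trans (by gcongr)
  · have hd := (one_add_abs_sub_le_four_mul_abs hij hθ).trans
      (mul_le_mul_of_nonneg_left ht (by norm_num))
    have hM' : (0 : ℝ) < M := by positivity
    have hsin : (1 + |(i : ℝ) - j|) / (4 * M) ≤ |sin (t / 2)| := by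
      rw [div_le_iff₀ (by positivity)]
      rw [mul_div_assoc', div_le_iff₀ hM'] at hd
      nlinarith [pi_pos]
    have hle : (fejerPoly N).eval (cos t) * ((1 + |(i : ℝ) - j|) / (4 * M)) ^ 2 ≤ 1 := by
      refine le_trans ?_ (eval_cos_fejerPoly_mul_sin_sq_le_one N t)
      rw [← sq_abs (sin _)]
      gcongr
      exact eval_cos_fejerPoly_nonneg N t
    rwa [← le_div_iff₀ (by positivity), one_div, ← inv_pow, inv_div] at hle

lemma gridAngle_mem_Icc {M : ℕ} {t : ℝ} (ht : 0 ≤ t) (htM : t ≤ M) :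
    gridAngle M t ∈ Icc 0 π := by
  have hstep : 0 ≤ π / M := by positivity
  refine ⟨mul_nonneg ht hstep, (mul_le_mul_of_nonneg_right htM hstep).trans ?_⟩
  rw [mul_div_assoc', mul_div_right_comm]
  exact mul_le_of_le_one_left pi_nonneg (div_self_le_one _)

/-- `gridPoint M 0 = 1, …, gridPoint M M = -1` are the division points of `[-1, 1]` which are
equally spaced in angle. -/
def gridPoint (M : ℕ) (t : ℝ) : ℝ := cos (gridAngle M t)

/-- The cells between consecutive grid points, numbered from right to left. -/
def gridCell (M i : ℕ) : Set ℝ := Icc (gridPoint M (i + 1)) (gridPoint M i)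

lemma gridCell_subset (M i : ℕ) : gridCell M i ⊆ Icc (-1) 1 :=
  Icc_subset_Icc (neg_one_le_cos _) (cos_le_one _)

lemma arccos_mem_of_mem_gridCell {M i : ℕ} (hi : i < M) {x : ℝ} (hx : x ∈ gridCell M i) :
    arccos x ∈ Icc (gridAngle M i) (gridAngle M (i + 1)) := by
  have hiM : (i : ℝ) + 1 ≤ M := by exact_mod_cast hi
  have hlo := gridAngle_mem_Icc (t := i) (Nat.cast_nonneg i) (by linarith)
  have hhi := gridAngle_mem_Icc (t := i + 1) (by positivity) hiM
  rw [← arccos_cos hlo.1 hlo.2, ← arccos_cos hhi.1 hhi.2]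
  exact ⟨antitone_arccos hx.2, antitone_arccos hx.1⟩

/-- A power of the Fejér kernel, of total degree at most `n`. -/
def jacksonPoly (r n : ℕ) : ℝ[X] := fejerPoly (n / r + 1) ^ r

lemma natDegree_jacksonPoly_le (r n : ℕ) : (jacksonPoly r n).natDegree ≤ n :=
  (natDegree_pow_le_of_le r (natDegree_fejerPoly_le le_rfl)).trans (Nat.mul_div_le n r)

lemma eval_cos_jacksonPoly_nonneg (r n : ℕ) (t : ℝ) : 0 ≤ (jacksonPoly r n).eval (cos t) := by
  rw [jacksonPoly, eval_pow]
  exact pow_nonneg (eval_cos_fejerPoly_nonneg _ t) r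

lemma eval_cos_jacksonPoly_add_le {r n i j : ℕ} (hr : r ≠ 0) (hi : i ≤ n) (hj : j ≤ n) {θ : ℝ}
    (hθ : θ ∈ Icc (gridAngle (n + 1) i) (gridAngle (n + 1) (i + 1))) :
    (jacksonPoly r n).eval (cos (θ - gridAngle (n + 1) (j + 1 / 2))) +
      (jacksonPoly r n).eval (cos (θ + gridAngle (n + 1) (j + 1 / 2))) ≤
      ((n / r + 1 : ℕ) : ℝ) ^ (2 * r) *
        (2 * (4 * r) ^ (2 * r) / (1 + |(i : ℝ) - j|) ^ (2 * r)) := by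
  set N := n / r + 1
  have hNn : N ≤ n + 1 := Nat.add_le_add_right (Nat.div_le_self n r) 1
  have hnN : ((n + 1 : ℕ) : ℝ) ≤ r * N := by
    exact_mod_cast Nat.lt_mul_div_succ n (Nat.pos_of_ne_zero hr)
  have hiM : (i : ℝ) + 1 ≤ (n + 1 : ℕ) := by norm_cast; omega
  have hjM : (j : ℝ) + 1 / 2 ≤ (n + 1 : ℕ) := by
    have : (j : ℝ) ≤ n := by exact_mod_cast hj
    push_cast
    linarith
  have hθ' : θ ∈ Icc 0 π := ⟨(gridAngle_mem_Icc (Nat.cast_nonneg i) (by linarith)).1.trans hθ.1,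
    hθ.2.trans (gridAngle_mem_Icc (by positivity) hiM).2⟩
  have hs := gridAngle_mem_Icc (t := j + 1 / 2) (by positivity) hjM
  have hbound {t : ℝ} (ht : |θ - gridAngle (n + 1) (j + 1 / 2)| ≤ π * |sin (t / 2)|) :
      (jacksonPoly r n).eval (cos t) ≤ (4 * (r * N) / (1 + |(i : ℝ) - j|)) ^ (2 * r) := by
    rw [jacksonPoly, eval_pow, pow_mul]
    refine pow_le_pow_left₀ (eval_cos_fejerPoly_nonneg _ t) ?_ r
    exact (eval_cos_fejerPoly_le_of_abs_le n.succ_ne_zero hNn hθ ht).trans (by gcongr)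
  calc _ ≤ 2 * (4 * (r * N) / (1 + |(i : ℝ) - j|)) ^ (2 * r) := by
        linarith [hbound (abs_sub_le_pi_mul_abs_sin_half_sub hθ' hs),
          hbound (abs_sub_le_pi_mul_abs_sin_half_add hθ' hs)]
    _ = _ := by
        rw [div_pow, mul_pow, mul_pow, mul_pow]
        ring

theorem exists_polynomial_partition_of_unity {r : ℕ} (hr : r ≠ 0) :
    ∃ C > (0 : ℝ), ∀ n : ℕ, ∃ Λ : ℕ → ℝ[X], (∀ j, (Λ j).natDegree ≤ n) ∧
      (∀ x ∈ Icc (-1 : ℝ) 1, ∑ j ∈ Finset.range (n + 1), (Λ j).eval x = 1) ∧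
      (∀ j, ∀ x ∈ Icc (-1 : ℝ) 1, 0 ≤ (Λ j).eval x) ∧
      ∀ i ≤ n, ∀ j ≤ n, ∀ x ∈ gridCell (n + 1) i,
        (Λ j).eval x ≤ C / (1 + |(i : ℝ) - j|) ^ (2 * r) := by
  refine ⟨2 * (4 * r) ^ (2 * r), by positivity, fun n ↦ ?_⟩
  have hdeg := natDegree_jacksonPoly_le r n
  have hnonneg := eval_cos_jacksonPoly_nonneg r n
  choose Λ hΛdeg hΛ using fun j : ℕ ↦
    exists_eval_cos_eq_eval_cos_sub_add hdeg (gridAngle (n + 1) (j + 1 / 2))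
  obtain ⟨S, hS⟩ := exists_forall_sum_eval_cos_sub_add_eq (M := n + 1) hdeg (by omega)
  have hΛ_nonneg (j : ℕ) (θ : ℝ) : 0 ≤ (Λ j).eval (cos θ) := by
    rw [hΛ]
    exact add_nonneg (hnonneg _) (hnonneg _)
  have hle : ((n / r + 1 : ℕ) : ℝ) ^ (2 * r) ≤ S := by
    simp only [← hΛ] at hS
    rw [← hS (gridAngle (n + 1) ((0 : ℕ) + 1 / 2))]
    refine le_trans ?_ (Finset.single_le_sum (fun j _ ↦ hΛ_nonneg j _)
      (Finset.mem_range.2 n.succ_pos))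
    rw [hΛ, sub_self, cos_zero, jacksonPoly, eval_pow, eval_one_fejerPoly, ← pow_mul]
    exact le_add_of_nonneg_right (by simpa [jacksonPoly] using hnonneg _)
  have hS₀ : 0 < S := lt_of_lt_of_le (by positivity) hle
  refine ⟨fun j ↦ C S⁻¹ * Λ j, fun j ↦ (natDegree_C_mul_le _ _).trans (hΛdeg j),
    fun x hx ↦ ?_, fun j x hx ↦ ?_, fun i hi j hj x hx ↦ ?_⟩
  · simp only [eval_mul, eval_C, ← Finset.mul_sum]
    rw [← cos_arccos hx.1 hx.2]
    simp only [hΛ, hS, inv_mul_cancel₀ hS₀.ne']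
  · rw [eval_mul, eval_C, ← cos_arccos hx.1 hx.2]
    exact mul_nonneg (inv_nonneg.2 hS₀.le) (hΛ_nonneg j _)
  · have hx' := gridCell_subset _ _ hx
    rw [eval_mul, eval_C, inv_mul_le_iff₀ hS₀, ← cos_arccos hx'.1 hx'.2, hΛ]
    refine (eval_cos_jacksonPoly_add_le hr hi hj
      (arccos_mem_of_mem_gridCell (Nat.lt_succ_of_le hi) hx)).trans ?_
    gcongr

end Kernel

/-! ### Discrete weighted inequalities -/

section LocalVariation

open Real

lemma sum_range_inv_one_add_sq_le (m : ℕ) :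
    ∑ j ∈ Finset.range m, ((1 + (j : ℝ)) ^ 2)⁻¹ ≤ 2 := by
  have h := sum_Ioo_inv_sq_le (α := ℝ) 0 (m + 1)
  rw [← Finset.Ico_succ_left_eq_Ioo, Finset.sum_Ico_eq_sum_range] at h
  simpa using h

lemma sum_range_inv_one_add_abs_sub_sq_le (k m : ℕ) :
    ∑ j ∈ Finset.range m, ((1 + |(j : ℝ) - k|) ^ 2)⁻¹ ≤ 4 := by
  calc ∑ j ∈ Finset.range m, ((1 + |(j : ℝ) - k|) ^ 2)⁻¹
      ≤ ∑ j ∈ Finset.range (k + 1 + m), ((1 + |(j : ℝ) - k|) ^ 2)⁻¹ :=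
        Finset.sum_le_sum_of_subset_of_nonneg (Finset.range_mono (by omega))
          fun _ _ _ ↦ by positivity
    _ = ∑ j ∈ Finset.range (k + 1), ((1 + |(j : ℝ) - k|) ^ 2)⁻¹ +
          ∑ j ∈ Finset.range m, ((1 + |((k + 1 + j : ℕ) : ℝ) - k|) ^ 2)⁻¹ :=
        Finset.sum_range_add ..
    _ ≤ 2 + 2 := by
        refine add_le_add ?_ ?_
        · rw [← Finset.sum_range_reflect]
          refine le_trans (Finset.sum_congr rfl fun j hj ↦ ?_).le
            (sum_range_inv_one_add_sq_le (k + 1))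
          rw [add_tsub_cancel_right, Nat.cast_sub (by grind), sub_sub_cancel_left, abs_neg,
            Nat.abs_cast]
        · refine le_trans (Finset.sum_le_sum fun j _ ↦ ?_) (sum_range_inv_one_add_sq_le m)
          gcongr
          push_cast
          exact le_trans (by linarith) (le_abs_self _)
    _ = 4 := by norm_num

lemma sum_mul_abs_rpow_le {κ : Type*} (t : Finset κ) {w : κ → ℝ} (hw : ∀ k, 0 ≤ w k) {A : ℝ}
    (hA : ∑ k ∈ t, w k ≤ A) {p : ℝ} (hp : 1 ≤ p) (b : κ → ℝ) :
    (∑ k ∈ t, w k * |b k|) ^ p ≤ A ^ (p - 1) * ∑ k ∈ t, w k * |b k| ^ p := by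
  have hp₀ : 0 < p := by linarith
  have hw_sum : 0 ≤ ∑ k ∈ t, w k := Finset.sum_nonneg fun k _ ↦ hw k
  have hwb_sum (f : κ → ℝ) (hf : ∀ k, 0 ≤ f k) : 0 ≤ ∑ k ∈ t, w k * f k :=
    Finset.sum_nonneg fun k _ ↦ mul_nonneg (hw k) (hf k)
  have hpow_sum := hwb_sum (fun k ↦ |b k| ^ p) fun k ↦ by positivity
  calc (∑ k ∈ t, w k * |b k|) ^ p
      ≤ ((∑ k ∈ t, w k) ^ (1 - p⁻¹) * (∑ k ∈ t, w k * |b k| ^ p) ^ p⁻¹) ^ p :=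
        rpow_le_rpow (hwb_sum _ fun k ↦ abs_nonneg _)
          (inner_le_weight_mul_Lp_of_nonneg t hp w (fun k ↦ |b k|) hw fun k ↦ abs_nonneg _) hp₀.le
    _ = (∑ k ∈ t, w k) ^ (p - 1) * ∑ k ∈ t, w k * |b k| ^ p := by
        rw [mul_rpow (by positivity) (by positivity), ← rpow_mul hw_sum, ← rpow_mul hpow_sum,
          inv_mul_cancel₀ hp₀.ne', rpow_one, sub_mul, inv_mul_cancel₀ hp₀.ne', one_mul]
    _ ≤ A ^ (p - 1) * ∑ k ∈ t, w k * |b k| ^ p := by gcongr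

lemma schur_test {ι κ : Type*} (s : Finset ι) (t : Finset κ) {K : ι → κ → ℝ}
    (hK : ∀ i k, 0 ≤ K i k) {A : ℝ} (hA : 0 < A) (hrow : ∀ i, ∑ k ∈ t, K i k ≤ A)
    (hcol : ∀ k, ∑ i ∈ s, K i k ≤ A) {p : ℝ} (hp : 1 ≤ p) (b : κ → ℝ) :
    ∑ i ∈ s, (∑ k ∈ t, K i k * |b k|) ^ p ≤ A ^ p * ∑ k ∈ t, |b k| ^ p :=
  calc ∑ i ∈ s, (∑ k ∈ t, K i k * |b k|) ^ p
      ≤ ∑ i ∈ s, A ^ (p - 1) * ∑ k ∈ t, K i k * |b k| ^ p :=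
        Finset.sum_le_sum fun i _ ↦ sum_mul_abs_rpow_le t (hK i) (hrow i) hp b
    _ = A ^ (p - 1) * ∑ k ∈ t, (∑ i ∈ s, K i k) * |b k| ^ p := by
        rw [← Finset.mul_sum, Finset.sum_comm]
        simp only [Finset.sum_mul]
    _ ≤ A ^ (p - 1) * ∑ k ∈ t, A * |b k| ^ p := by
        gcongr with k
        exact hcol k
    _ = A ^ p * ∑ k ∈ t, |b k| ^ p := by
        rw [← Finset.mul_sum, ← mul_assoc, rpow_sub_one hA.ne', div_mul_cancel₀ _ hA.ne']

/-- The variation of `F 0, …, F n`, localised around the index `i` with polynomial decay. -/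
def localVariation (n s : ℕ) (F : ℕ → ℝ) (i : ℕ) : ℝ :=
  ∑ k ∈ Finset.range n, |F k - F (k + 1)| / (1 + |(i : ℝ) - k|) ^ s

lemma localVariation_nonneg (n s : ℕ) (F : ℕ → ℝ) (i : ℕ) : 0 ≤ localVariation n s F i :=
  Finset.sum_nonneg fun _ _ ↦ by positivity

lemma rpow_inv_mul_localVariation_le {n s i : ℕ} {w : ℕ → ℝ} (hwi : 0 ≤ w i)
    (hw : ∀ k ≤ n, 0 ≤ w k) {σ : ℝ} (hσ : 0 ≤ σ) (hσs : σ + 2 ≤ s)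
    (hwσ : ∀ k ≤ n, w i ≤ (1 + |(i : ℝ) - k|) ^ σ * w k) {p : ℝ} (hp : 1 ≤ p) (F : ℕ → ℝ) :
    w i ^ p⁻¹ * localVariation n s F i ≤
      ∑ k ∈ Finset.range n,
        ((1 + |(i : ℝ) - k|) ^ 2)⁻¹ * |w k ^ p⁻¹ * (F k - F (k + 1))| := by
  rw [localVariation, Finset.mul_sum]
  refine Finset.sum_le_sum fun k hk ↦ ?_
  have hk : k ≤ n := (Finset.mem_range.1 hk).le
  have hwk : 0 ≤ w k ^ p⁻¹ := rpow_nonneg (hw k hk) _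
  have hd : 1 ≤ 1 + |(i : ℝ) - k| := by linarith [abs_nonneg ((i : ℝ) - k)]
  have hexp : σ * p⁻¹ ≤ s - 2 :=
    (mul_le_of_le_one_right hσ (inv_le_one_of_one_le₀ hp)).trans (by linarith)
  have hroot_le : w i ^ p⁻¹ ≤ (1 + |(i : ℝ) - k|) ^ ((s : ℝ) - 2) * w k ^ p⁻¹ := by
    refine (rpow_le_rpow hwi (hwσ k hk) (by positivity)).trans ?_
    rw [mul_rpow (by positivity) (hw k hk), ← rpow_mul (by positivity)]
    gcongr
  rw [abs_mul, abs_of_nonneg hwk]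
  refine (mul_le_mul_of_nonneg_right hroot_le (by positivity)).trans_eq ?_
  rw [rpow_sub (by positivity), rpow_natCast, rpow_two]
  field_simp

lemma sum_mul_localVariation_rpow_le {n s : ℕ} {w : ℕ → ℝ} (hw : ∀ i ≤ n, 0 ≤ w i) {σ : ℝ}
    (hσ : 0 ≤ σ) (hσs : σ + 2 ≤ s)
    (hwσ : ∀ i ≤ n, ∀ k ≤ n, w i ≤ (1 + |(i : ℝ) - k|) ^ σ * w k) {p : ℝ} (hp : 1 ≤ p)
    (F : ℕ → ℝ) :
    ∑ i ∈ Finset.range (n + 1), w i * localVariation n s F i ^ p ≤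
      4 ^ p * ∑ k ∈ Finset.range n, w k * |F k - F (k + 1)| ^ p := by
  have hp₀ : 0 < p := by linarith
  have hroot {i : ℕ} (hi : i ≤ n) : (w i ^ p⁻¹) ^ p = w i := rpow_inv_rpow (hw i hi) hp₀.ne'
  calc ∑ i ∈ Finset.range (n + 1), w i * localVariation n s F i ^ p
      = ∑ i ∈ Finset.range (n + 1), (w i ^ p⁻¹ * localVariation n s F i) ^ p := by
        refine Finset.sum_congr rfl fun i hi ↦ ?_
        have hi : i ≤ n := Nat.lt_succ_iff.1 (Finset.mem_range.1 hi)
        rw [mul_rpow (rpow_nonneg (hw i hi) _) (localVariation_nonneg n s F i), hroot hi]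
    _ ≤ ∑ i ∈ Finset.range (n + 1), (∑ k ∈ Finset.range n,
          ((1 + |(i : ℝ) - k|) ^ 2)⁻¹ * |w k ^ p⁻¹ * (F k - F (k + 1))|) ^ p := by
        refine Finset.sum_le_sum fun i hi ↦ ?_
        have hi : i ≤ n := Nat.lt_succ_iff.1 (Finset.mem_range.1 hi)
        refine rpow_le_rpow ?_
          (rpow_inv_mul_localVariation_le (hw i hi) hw hσ hσs (hwσ i hi) hp F) hp₀.le
        exact mul_nonneg (rpow_nonneg (hw i hi) _) (localVariation_nonneg n s F i)
    _ ≤ 4 ^ p * ∑ k ∈ Finset.range n, |w k ^ p⁻¹ * (F k - F (k + 1))| ^ p := by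
        refine schur_test _ _ (fun i k ↦ by positivity) four_pos (fun i ↦ ?_)
          (fun k ↦ sum_range_inv_one_add_abs_sub_sq_le k _) hp _
        simpa only [abs_sub_comm] using sum_range_inv_one_add_abs_sub_sq_le i n
    _ = 4 ^ p * ∑ k ∈ Finset.range n, w k * |F k - F (k + 1)| ^ p := by
        congr 1
        refine Finset.sum_congr rfl fun k hk ↦ ?_
        have hk : k ≤ n := (Finset.mem_range.1 hk).le
        rw [abs_mul, mul_rpow (abs_nonneg _) (abs_nonneg _),
          abs_of_nonneg (rpow_nonneg (hw k hk) _), hroot hk]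

lemma abs_sub_div_le_sum {n i j : ℕ} (hi : i ≤ n) (hj : j ≤ n) (s : ℕ) (F : ℕ → ℝ) :
    |F i - F j| / (1 + |(i : ℝ) - j|) ^ (2 * s) ≤
      ∑ k ∈ Finset.range n,
        |F k - F (k + 1)| / (1 + |(i : ℝ) - k|) ^ s * ((1 + |(j : ℝ) - k|) ^ s)⁻¹ := by
  wlog hij : i ≤ j generalizing i j
  · rw [abs_sub_comm, abs_sub_comm (i : ℝ)]
    refine (this hj hi (by omega)).trans_eq (Finset.sum_congr rfl fun k _ ↦ ?_)
    ring
  have htelescope : |F i - F j| ≤ ∑ k ∈ Finset.Ico i j, |F k - F (k + 1)| := by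
    simpa only [Real.dist_eq] using dist_le_Ico_sum_dist F hij
  calc |F i - F j| / (1 + |(i : ℝ) - j|) ^ (2 * s)
      ≤ ∑ k ∈ Finset.Ico i j, |F k - F (k + 1)| / (1 + |(i : ℝ) - j|) ^ (2 * s) := by
        rw [← Finset.sum_div]
        gcongr
    _ ≤ ∑ k ∈ Finset.Ico i j,
          |F k - F (k + 1)| / (1 + |(i : ℝ) - k|) ^ s * ((1 + |(j : ℝ) - k|) ^ s)⁻¹ := by
        refine Finset.sum_le_sum fun k hk ↦ ?_
        obtain ⟨hik, hkj⟩ := Finset.mem_Ico.1 hk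
        have hik : (i : ℝ) ≤ k := by exact_mod_cast hik
        have hkj : (k : ℝ) ≤ j := by exact_mod_cast hkj.le
        rw [← div_eq_mul_inv, div_div, two_mul, pow_add]
        gcongr 2 <;> gcongr 2 <;> grind
    _ ≤ _ := by
        refine Finset.sum_le_sum_of_subset_of_nonneg (fun k hk ↦ ?_) fun _ _ _ ↦ by positivity
        exact Finset.mem_range.2 ((Finset.mem_Ico.1 hk).2.trans_le hj)

theorem abs_sub_sum_mul_le_localVariation {n s i : ℕ} (hs : 2 ≤ s) (hi : i ≤ n) {C : ℝ}
    {l : ℕ → ℝ} (hl_nonneg : ∀ j, 0 ≤ l j) (hl_sum : ∑ j ∈ Finset.range (n + 1), l j = 1)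
    (hl_le : ∀ j ≤ n, l j ≤ C / (1 + |(i : ℝ) - j|) ^ (2 * s)) (F : ℕ → ℝ) :
    |F i - ∑ j ∈ Finset.range (n + 1), F j * l j| ≤ 4 * C * localVariation n s F i := by
  have hC : 0 ≤ C := by simpa using (hl_nonneg i).trans (hl_le i hi)
  have hrow (k : ℕ) : ∑ j ∈ Finset.range (n + 1), ((1 + |(j : ℝ) - k|) ^ s)⁻¹ ≤ 4 := by
    refine (Finset.sum_le_sum fun j _ ↦ ?_).trans (sum_range_inv_one_add_abs_sub_sq_le k (n + 1))
    gcongr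
    linarith [abs_nonneg ((j : ℝ) - k)]
  calc |F i - ∑ j ∈ Finset.range (n + 1), F j * l j|
      = |∑ j ∈ Finset.range (n + 1), (F i - F j) * l j| := by
        simp only [sub_mul, Finset.sum_sub_distrib, ← Finset.mul_sum, hl_sum, mul_one]
    _ ≤ ∑ j ∈ Finset.range (n + 1), |F i - F j| * l j := by
        refine (Finset.abs_sum_le_sum_abs _ _).trans_eq (Finset.sum_congr rfl fun j _ ↦ ?_)
        rw [abs_mul, abs_of_nonneg (hl_nonneg j)]
    _ ≤ ∑ j ∈ Finset.range (n + 1), C * ∑ k ∈ Finset.range n,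
          |F k - F (k + 1)| / (1 + |(i : ℝ) - k|) ^ s * ((1 + |(j : ℝ) - k|) ^ s)⁻¹ := by
        refine Finset.sum_le_sum fun j hj ↦ ?_
        have hj : j ≤ n := Nat.lt_succ_iff.1 (Finset.mem_range.1 hj)
        refine (mul_le_mul_of_nonneg_left (hl_le j hj) (abs_nonneg _)).trans ?_
        rw [mul_div_left_comm]
        exact mul_le_mul_of_nonneg_left (abs_sub_div_le_sum hi hj s F) hC
    _ = C * ∑ k ∈ Finset.range n, |F k - F (k + 1)| / (1 + |(i : ℝ) - k|) ^ s *
          ∑ j ∈ Finset.range (n + 1), ((1 + |(j : ℝ) - k|) ^ s)⁻¹ := by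
        rw [← Finset.mul_sum, Finset.sum_comm]
        simp only [Finset.mul_sum]
    _ ≤ C * ∑ k ∈ Finset.range n, |F k - F (k + 1)| / (1 + |(i : ℝ) - k|) ^ s * 4 := by
        gcongr with k
        exact hrow k
    _ = 4 * C * localVariation n s F i := by
        rw [← Finset.sum_mul, localVariation]
        ring

end LocalVariation

section SummationByParts

open Real

/-- The odd extension of `x ↦ x ^ p` from `[0, ∞)` to `ℝ`. -/
def signedRpow (p x : ℝ) : ℝ := Real.sign x * |x| ^ p

lemma abs_signedRpow {p : ℝ} (hp : p ≠ 0) (x : ℝ) : |signedRpow p x| = |x| ^ p := by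
  rcases eq_or_ne x 0 with rfl | hx
  · simp [signedRpow, hp]
  · rw [signedRpow, abs_mul, abs_of_nonneg (rpow_nonneg (abs_nonneg x) p)]
    rcases hx.lt_or_gt with h | h <;> simp [sign_of_neg, sign_of_pos, h]

lemma signedRpow_neg (p x : ℝ) : signedRpow p (-x) = -signedRpow p x := by
  simp [signedRpow, sign_neg]

lemma signedRpow_of_nonneg {p x : ℝ} (hp : p ≠ 0) (hx : 0 ≤ x) : signedRpow p x = x ^ p := by
  rcases hx.eq_or_lt with rfl | hx
  · simp [signedRpow, hp]
  · simp [signedRpow, sign_of_pos hx, abs_of_pos hx]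

lemma add_rpow_le_two_rpow_mul {p x y : ℝ} (hp : 1 ≤ p) (hx : 0 ≤ x) (hy : 0 ≤ y) :
    (x + y) ^ p ≤ 2 ^ (p - 1) * (x ^ p + y ^ p) := by
  exact_mod_cast NNReal.rpow_add_le_mul_rpow_add_rpow ⟨x, hx⟩ ⟨y, hy⟩ hp

lemma sub_rpow_le_signedRpow_sub {p x y : ℝ} (hp : 1 ≤ p) (hyx : y ≤ x) :
    (x - y) ^ p ≤ 2 ^ (p - 1) * (signedRpow p x - signedRpow p y) := by
  have hp₀ : p ≠ 0 := by linarith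
  have same_sign {u v : ℝ} (hv : 0 ≤ v) (hvu : v ≤ u) :
      (u - v) ^ p ≤ 2 ^ (p - 1) * (signedRpow p u - signedRpow p v) := by
    rw [signedRpow_of_nonneg hp₀ hv, signedRpow_of_nonneg hp₀ (hv.trans hvu)]
    have hsuper := add_rpow_le_rpow_add (sub_nonneg.2 hvu) hv hp
    rw [sub_add_cancel] at hsuper
    exact (le_sub_iff_add_le.2 hsuper).trans (le_mul_of_one_le_left
      (sub_nonneg.2 (rpow_le_rpow hv hvu (by linarith)))
      (one_le_rpow one_le_two (by linarith)))
  rcases le_total 0 y with hy | hy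
  · exact same_sign hy hyx
  rcases le_total 0 x with hx | hx
  · have h := add_rpow_le_two_rpow_mul hp hx (neg_nonneg.2 hy)
    rwa [← sub_eq_add_neg, ← signedRpow_of_nonneg hp₀ hx,
      ← signedRpow_of_nonneg hp₀ (neg_nonneg.2 hy), signedRpow_neg, ← sub_eq_add_neg] at h
  · have h := same_sign (neg_nonneg.2 hx) (neg_le_neg hyx)
    rwa [signedRpow_neg, signedRpow_neg, neg_sub_neg, neg_sub_neg] at h

lemma sum_mul_sub_succ_eq {V : ℕ → ℝ} (hV : V 0 = 0) (G : ℕ → ℝ) (n : ℕ) :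
    ∑ k ∈ Finset.range n, V (k + 1) * (G k - G (k + 1)) =
      ∑ k ∈ Finset.range n, (V (k + 1) - V k) * G k - V n * G n := by
  induction n with
  | zero => simp [hV]
  | succ n ih =>
    rw [Finset.sum_range_succ, Finset.sum_range_succ, ih]
    ring

lemma sum_mul_abs_sub_rpow_le_of_antitoneOn {n : ℕ} {F V : ℕ → ℝ} {p : ℝ} (hp : 1 ≤ p)
    (hF : AntitoneOn F (Iic n)) (hV₀ : V 0 = 0) (hV : ∀ k < n, 0 ≤ V (k + 1)) :
    ∑ k ∈ Finset.range n, V (k + 1) * |F k - F (k + 1)| ^ p ≤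
      2 ^ (p - 1) *
        (∑ k ∈ Finset.range n, |V (k + 1) - V k| * |F k| ^ p + |V n| * |F n| ^ p) := by
  have hp₀ : p ≠ 0 := by linarith
  calc ∑ k ∈ Finset.range n, V (k + 1) * |F k - F (k + 1)| ^ p
      ≤ ∑ k ∈ Finset.range n,
          2 ^ (p - 1) * (V (k + 1) * (signedRpow p (F k) - signedRpow p (F (k + 1)))) := by
        refine Finset.sum_le_sum fun k hk ↦ ?_
        have hk : k < n := Finset.mem_range.1 hk
        have hstep : F (k + 1) ≤ F k := hF (mem_Iic.2 hk.le) (mem_Iic.2 hk) k.le_succ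
        rw [abs_of_nonneg (sub_nonneg.2 hstep), mul_left_comm]
        exact mul_le_mul_of_nonneg_left (sub_rpow_le_signedRpow_sub hp hstep) (hV k hk)
    _ = 2 ^ (p - 1) * (∑ k ∈ Finset.range n, (V (k + 1) - V k) * signedRpow p (F k) -
          V n * signedRpow p (F n)) := by
        rw [← Finset.mul_sum, sum_mul_sub_succ_eq hV₀ fun k ↦ signedRpow p (F k)]
    _ ≤ _ := by
        have habs (v : ℝ) (k : ℕ) : |v * signedRpow p (F k)| = |v| * |F k| ^ p := by
          rw [abs_mul, abs_signedRpow hp₀]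
        rw [sub_eq_add_neg]
        refine mul_le_mul_of_nonneg_left (add_le_add (Finset.sum_le_sum fun k _ ↦ ?_) ?_)
          (by positivity)
        · exact (le_abs_self _).trans_eq (habs _ k)
        · exact (neg_le_abs _).trans_eq (habs _ n)

end SummationByParts

/-! ### Power weights on the grid -/

section GridWeight

open Real

/-- The discrete counterpart of a Jacobi weight on the grid with `M` cells: up to constants,
`(1 - x) ^ (a / 2) * (1 + x) ^ (b / 2)` on the `t`-th cell. The position `t` is real so that
`gridWeight M a b (-1) = 0` makes sense for `a ≠ 0`. -/
def gridWeight (M : ℕ) (a b t : ℝ) : ℝ := ((t + 1) / M) ^ a * ((M - t) / M) ^ b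

/-- The length of the `t`-th cell of the grid with `M` cells, up to constants. -/
def cellLength (M : ℕ) (t : ℝ) : ℝ := (t + 1) / M * ((M - t) / M) / M

/-- The sum of the reciprocals of the distances, counted in cells, from the `t`-th cell to the two
ends of the grid. It controls the relative increments of `gridWeight`. -/
def endWeight (M : ℕ) (t : ℝ) : ℝ := 1 / (t + 1) + 1 / (M - t)

variable {M : ℕ} {a b t : ℝ}

lemma gridWeight_nonneg (ht : -1 ≤ t) (htM : t ≤ M) : 0 ≤ gridWeight M a b t :=
  mul_nonneg (rpow_nonneg (div_nonneg (by linarith) M.cast_nonneg) a)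
    (rpow_nonneg (div_nonneg (by linarith) M.cast_nonneg) b)

lemma cellLength_nonneg (ht : -1 ≤ t) (htM : t ≤ M) : 0 ≤ cellLength M t :=
  div_nonneg (mul_nonneg (div_nonneg (by linarith) M.cast_nonneg)
    (div_nonneg (by linarith) M.cast_nonneg)) M.cast_nonneg

lemma one_le_endWeight (ht : 0 ≤ t) (htM : t + 1 ≤ M) (hend : t = 0 ∨ t + 1 = M) :
    1 ≤ endWeight M t := by
  have hleft : 0 ≤ 1 / (t + 1) := by positivity
  have hright : 0 ≤ 1 / (M - t) := one_div_nonneg.2 (by linarith)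
  rcases hend with rfl | hend
  · rw [endWeight, zero_add, div_one]
    exact le_add_of_nonneg_right hright
  · simpa [endWeight, ← hend] using hleft

lemma endWeight_nonneg (ht : -1 ≤ t) (htM : t ≤ M) : 0 ≤ endWeight M t :=
  add_nonneg (one_div_nonneg.2 (by linarith)) (one_div_nonneg.2 (by linarith))

lemma cellLength_mul_endWeight (ht : 0 ≤ t) (htM : t < M) :
    cellLength M t * endWeight M t = (M + 1) / M ^ 3 := by
  have hM : (0 : ℝ) < M := ht.trans_lt htM
  have hright : (0 : ℝ) < M - t := sub_pos.2 htM
  rw [cellLength, endWeight]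
  field_simp
  ring

lemma gridWeight_rpow_mul_cellLength (ht : 0 ≤ t) (htM : t < M) (p : ℝ) :
    gridWeight M a b t ^ p * cellLength M t = gridWeight M (a * p + 1) (b * p + 1) t / M := by
  have hM : (0 : ℝ) < M := ht.trans_lt htM
  have hright : (0 : ℝ) < (M - t) / M := div_pos (sub_pos.2 htM) hM
  have hleft : 0 < (t + 1) / M := by positivity
  rw [gridWeight, gridWeight, cellLength, mul_rpow (by positivity) (by positivity),
    ← rpow_mul hleft.le, ← rpow_mul hright.le, rpow_add_one hleft.ne', rpow_add_one hright.ne']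
  ring

lemma gridWeight_le_one_add_abs_sub_rpow_mul {i k : ℕ} (hi : i < M) (hk : k < M) (ha : 0 ≤ a)
    (hb : 0 ≤ b) :
    gridWeight M a b i ≤ (1 + |(i : ℝ) - k|) ^ (a + b) * gridWeight M a b k := by
  have hiM : (i : ℝ) + 1 ≤ M := by exact_mod_cast hi
  have hkM : (k : ℝ) + 1 ≤ M := by exact_mod_cast hk
  have hM : (0 : ℝ) < M := by linarith [i.cast_nonneg (α := ℝ)]
  have hid : 0 ≤ ((M : ℝ) - i) / M := div_nonneg (by linarith) hM.le
  have hkd : 0 ≤ ((M : ℝ) - k) / M := div_nonneg (by linarith) hM.le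
  have hik := le_abs_self ((i : ℝ) - k)
  have hki := neg_le_abs ((i : ℝ) - k)
  have hleft : ((i : ℝ) + 1) / M ≤ (1 + |(i : ℝ) - k|) * (((k : ℝ) + 1) / M) := by
    rw [← mul_div_assoc]
    gcongr
    nlinarith [mul_nonneg (abs_nonneg ((i : ℝ) - k)) k.cast_nonneg]
  have hright : ((M : ℝ) - i) / M ≤ (1 + |(i : ℝ) - k|) * (((M : ℝ) - k) / M) := by
    rw [← mul_div_assoc]
    gcongr
    nlinarith [mul_nonneg (abs_nonneg ((i : ℝ) - k)) (sub_nonneg.2 hkM)]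
  calc gridWeight M a b i
      ≤ ((1 + |(i : ℝ) - k|) * (((k : ℝ) + 1) / M)) ^ a *
        ((1 + |(i : ℝ) - k|) * (((M : ℝ) - k) / M)) ^ b := by rw [gridWeight]; gcongr
    _ = (1 + |(i : ℝ) - k|) ^ (a + b) * gridWeight M a b k := by
      rw [gridWeight, mul_rpow (by positivity) (by positivity), mul_rpow (by positivity) hkd,
        rpow_add (by positivity)]
      ring

lemma rpow_sub_rpow_le_mul {x y : ℝ} (hx : 0 ≤ x) (hy : 0 < y) (hb : 1 ≤ b) :
    y ^ b - x ^ b ≤ b * (y ^ b * ((y - x) / y)) := by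
  have bernoulli := one_add_mul_self_le_rpow_one_add (s := x / y - 1) (p := b)
    (by linarith [div_nonneg hx hy.le]) hb
  rw [add_sub_cancel, div_rpow hx hy.le, le_div_iff₀ (by positivity)] at bernoulli
  have expand : (y - x) / y = 1 - x / y := by rw [sub_div, div_self hy.ne']
  rw [expand]
  linarith

lemma div_rpow_sub_sub_one_div_rpow_le {x : ℝ} (hx : 1 ≤ x) (hM : M ≠ 0) (hb : 1 ≤ b) :
    (x / M) ^ b - ((x - 1) / M) ^ b ≤ b * ((x / M) ^ b * (1 / x)) := by
  have hM' : (0 : ℝ) < M := by positivity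
  have ratio : (x / M - (x - 1) / M) / (x / M) = 1 / x := by field_simp; ring
  rw [← ratio]
  exact rpow_sub_rpow_le_mul (div_nonneg (sub_nonneg.2 hx) hM'.le) (by positivity) hb

lemma add_one_div_rpow_sub_div_rpow_le {x : ℝ} (hx : 1 ≤ x) (hM : M ≠ 0) (hb : 1 ≤ b) :
    ((x + 1) / M) ^ b - (x / M) ^ b ≤ b * 2 ^ b * ((x / M) ^ b * (1 / x)) := by
  have step := div_rpow_sub_sub_one_div_rpow_le (x := x + 1) (by linarith) hM hb
  rw [add_sub_cancel_right] at step
  have double : ((x + 1) / M) ^ b ≤ 2 ^ b * (x / M) ^ b := by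
    rw [← mul_rpow zero_le_two (by positivity), ← mul_div_assoc]
    gcongr
    linarith
  calc ((x + 1) / M) ^ b - (x / M) ^ b ≤ b * (((x + 1) / M) ^ b * (1 / (x + 1))) := step
    _ ≤ b * (2 ^ b * (x / M) ^ b * (1 / x)) := by gcongr; linarith
    _ = b * 2 ^ b * ((x / M) ^ b * (1 / x)) := by ring

lemma abs_gridWeight_sub_le (ht : 0 ≤ t) (htM : t + 1 ≤ M) (ha : 1 ≤ a) (hb : 1 ≤ b) :
    |gridWeight M a b t - gridWeight M a b (t - 1)| ≤
      (a + b * 2 ^ b) * (gridWeight M a b t * endWeight M t) := by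
  have hM : (0 : ℝ) < M := by linarith
  have hMt : (0 : ℝ) < M - t := by linarith
  have left_step := div_rpow_sub_sub_one_div_rpow_le (x := t + 1) (M := M) (by linarith)
    (by exact_mod_cast hM.ne') ha
  have right_step := add_one_div_rpow_sub_div_rpow_le (x := M - t) (M := M) (by linarith)
    (by exact_mod_cast hM.ne') hb
  rw [add_sub_cancel_right] at left_step
  have hprev : gridWeight M a b (t - 1) = (t / M) ^ a * ((M - t + 1) / M) ^ b := by
    rw [gridWeight, sub_add_cancel, sub_sub_eq_add_sub, add_sub_right_comm]
  have left_mono : (t / M) ^ a ≤ ((t + 1) / M) ^ a := by gcongr; linarith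
  have right_mono : ((M - t) / M) ^ b ≤ ((M - t + 1) / M) ^ b := by gcongr; linarith
  set u := ((t + 1) / M) ^ a
  set u' := (t / M) ^ a
  set v := ((M - t) / M) ^ b
  set v' := ((M - t + 1) / M) ^ b
  have hcur : gridWeight M a b t = u * v := rfl
  have hu' : 0 ≤ u' := by positivity
  have hv : 0 ≤ v := by positivity
  calc |gridWeight M a b t - gridWeight M a b (t - 1)|
      = |(u - u') * v - u' * (v' - v)| := by rw [hcur, hprev]; ring_nf
    _ ≤ (u - u') * v + u' * (v' - v) := by
      refine (abs_sub _ _).trans_eq ?_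
      rw [abs_of_nonneg (mul_nonneg (sub_nonneg.2 left_mono) hv),
        abs_of_nonneg (mul_nonneg hu' (sub_nonneg.2 right_mono))]
    _ ≤ a * (u * (1 / (t + 1))) * v + u * (b * 2 ^ b * (v * (1 / (M - t)))) := by
      gcongr
    _ = a * (u * v) * (1 / (t + 1)) + b * 2 ^ b * (u * v) * (1 / (M - t)) := by ring
    _ ≤ a * (u * v) * endWeight M t + b * 2 ^ b * (u * v) * endWeight M t := by
      have : 0 ≤ u := hu'.trans left_mono
      gcongr
      · exact le_add_of_nonneg_right (by positivity)
      · exact le_add_of_nonneg_left (by positivity)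
    _ = (a + b * 2 ^ b) * (gridWeight M a b t * endWeight M t) := by rw [hcur]; ring

lemma abs_gridWeight_sub_one_le (ht : 0 ≤ t) (htM : t + 1 ≤ M) (ha : 1 ≤ a) (hb : 1 ≤ b)
    (hend : 1 ≤ endWeight M t) :
    |gridWeight M a b (t - 1)| ≤ (1 + (a + b * 2 ^ b)) * (gridWeight M a b t * endWeight M t) := by
  have hw : 0 ≤ gridWeight M a b t := gridWeight_nonneg (by linarith) (by linarith)
  have htri := abs_sub_abs_le_abs_sub (gridWeight M a b (t - 1)) (gridWeight M a b t)
  rw [abs_sub_comm, abs_of_nonneg hw] at htri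
  linarith [abs_gridWeight_sub_le ht htM ha hb, le_mul_of_one_le_right hw hend]

lemma sum_gridWeight_mul_localVariation_rpow_le {n s : ℕ} {p : ℝ} (hp : 1 ≤ p) (ha : 1 ≤ a)
    (hb : 1 ≤ b) (hs : a + b + 2 ≤ s) {F : ℕ → ℝ} (hF : AntitoneOn F (Iic n)) :
    ∑ i ∈ Finset.range (n + 1), gridWeight (n + 1) a b i * localVariation n s F i ^ p ≤
      4 ^ p * (2 ^ (p - 1) * ((1 + (a + b * 2 ^ b)) *
        ∑ i ∈ Finset.range (n + 1),
          gridWeight (n + 1) a b i * endWeight (n + 1) i * |F i| ^ p)) := by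
  set c := a + b * 2 ^ b
  have : 0 ≤ c := by positivity
  have hle {k : ℕ} (hk : k ≤ n) : (k : ℝ) + 1 ≤ (n + 1 : ℕ) := by exact_mod_cast Nat.succ_le_succ hk
  have hw {k : ℕ} (hk : k ≤ n) : 0 ≤ gridWeight (n + 1) a b k :=
    gridWeight_nonneg (by linarith [k.cast_nonneg (α := ℝ)]) (by linarith [hle hk])
  have hlast : 1 ≤ endWeight (n + 1) n :=
    one_le_endWeight n.cast_nonneg (hle le_rfl) (Or.inr (by push_cast; rfl))
  refine (sum_mul_localVariation_rpow_le (fun i hi ↦ hw hi) (by positivity) hs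
    (fun i hi k hk ↦ gridWeight_le_one_add_abs_sub_rpow_mul (by omega) (by omega) (by linarith)
      (by linarith)) hp F).trans ?_
  have parts := sum_mul_abs_sub_rpow_le_of_antitoneOn (V := fun k ↦ gridWeight (n + 1) a b (k - 1))
    hp hF (by simp [gridWeight, (by linarith : a ≠ 0)]) (fun k hk ↦ by simpa using hw hk.le)
  simp only [Nat.cast_add, Nat.cast_one, add_sub_cancel_right] at parts
  gcongr
  refine parts.trans ?_
  gcongr
  rw [Finset.sum_range_succ, mul_add, Finset.mul_sum, ← mul_assoc _ _ (|F n| ^ p)]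
  refine add_le_add (Finset.sum_le_sum fun k hk ↦ ?_) ?_
  · have hk' : k ≤ n := (Finset.mem_range.1 hk).le
    have hend : 0 ≤ endWeight (n + 1) k :=
      endWeight_nonneg (by linarith [k.cast_nonneg (α := ℝ)]) (by linarith [hle hk'])
    have hstep := abs_gridWeight_sub_le k.cast_nonneg (hle hk') ha hb
    rw [← mul_assoc]
    gcongr
    linarith [mul_nonneg (hw hk') hend]
  · gcongr
    exact abs_gridWeight_sub_one_le n.cast_nonneg (hle le_rfl) ha hb hlast

lemma sum_gridWeight_rpow_mul_cellLength_mul_localVariation_rpow_le {s : ℕ} {p : ℝ} (hp : 1 ≤ p)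
    (ha : 0 ≤ a) (hb : 0 ≤ b) (hs : (a + b) * p + 4 ≤ s) :
    ∃ C > 0, ∀ n : ℕ, ∀ F : ℕ → ℝ, AntitoneOn F (Iic n) →
      ∑ i ∈ Finset.range (n + 1), gridWeight (n + 1) a b i ^ p * cellLength (n + 1) i *
          localVariation n s F i ^ p ≤
        C * ∑ i ∈ Finset.range (n + 1),
          |F i| ^ p * (gridWeight (n + 1) a b i ^ p * (cellLength (n + 1) i * endWeight (n + 1) i))
    := by
  have hap : 0 ≤ a * p := by positivity
  have hbp : 0 ≤ b * p := by positivity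
  refine ⟨4 ^ p * (2 ^ (p - 1) * (1 + (a * p + 1 + (b * p + 1) * 2 ^ (b * p + 1)))), by positivity,
    fun n F hF ↦ ?_⟩
  have key := sum_gridWeight_mul_localVariation_rpow_le (a := a * p + 1) (b := b * p + 1) (s := s)
    hp (by linarith) (by linarith) (by linarith) hF
  have hterm {i : ℕ} (hi : i ∈ Finset.range (n + 1)) : gridWeight (n + 1) a b i ^ p *
      cellLength (n + 1) i = gridWeight (n + 1) (a * p + 1) (b * p + 1) i / (n + 1 : ℕ) :=
    gridWeight_rpow_mul_cellLength i.cast_nonneg (by exact_mod_cast Finset.mem_range.1 hi) p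
  calc _ = (∑ i ∈ Finset.range (n + 1), gridWeight (n + 1) (a * p + 1) (b * p + 1) i *
        localVariation n s F i ^ p) / (n + 1 : ℕ) := by
        rw [Finset.sum_div]
        exact Finset.sum_congr rfl fun i hi ↦ by rw [hterm hi]; ring
    _ ≤ _ := div_le_div_of_nonneg_right key (Nat.cast_nonneg _)
    _ = _ := by
      rw [Finset.mul_sum, Finset.mul_sum, Finset.mul_sum, Finset.mul_sum, Finset.sum_div]
      refine Finset.sum_congr rfl fun i hi ↦ ?_
      rw [← mul_assoc (gridWeight (n + 1) a b i ^ p), hterm hi]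
      ring

lemma sum_endWeight_le (M : ℕ) :
    ∑ k ∈ Finset.range M, endWeight M k ≤ 2 * (1 + log M) := by
  have hharmonic : ∑ k ∈ Finset.range M, 1 / ((k : ℝ) + 1) ≤ 1 + log M := by
    simpa [harmonic] using harmonic_le_one_add_log M
  have hreflect : ∑ k ∈ Finset.range M, 1 / ((M : ℝ) - k) =
      ∑ k ∈ Finset.range M, 1 / ((k : ℝ) + 1) := by
    rw [← Finset.sum_range_reflect]
    refine Finset.sum_congr rfl fun k hk ↦ ?_
    have hk := Finset.mem_range.1 hk
    rw [Nat.sub_sub, Nat.cast_sub (by omega)]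
    push_cast
    ring_nf
  simp only [endWeight, Finset.sum_add_distrib, hreflect]
  linarith

lemma sum_cellLength_mul_endWeight_sq_le (hM : 2 ≤ M) :
    ∑ k ∈ Finset.range M, cellLength M k * endWeight M k ^ 2 ≤ 8 * log M / M ^ 2 := by
  have hM' : (2 : ℝ) ≤ M := by exact_mod_cast hM
  have hlog : 2 / 3 ≤ log M := by
    linarith [log_two_gt_d9, log_le_log zero_lt_two hM']
  calc ∑ k ∈ Finset.range M, cellLength M k * endWeight M k ^ 2
      = (M + 1) / M ^ 3 * ∑ k ∈ Finset.range M, endWeight M k := by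
        rw [Finset.mul_sum]
        refine Finset.sum_congr rfl fun k hk ↦ ?_
        rw [sq, ← mul_assoc, cellLength_mul_endWeight k.cast_nonneg
          (by exact_mod_cast Finset.mem_range.1 hk)]
    _ ≤ (M + 1) / M ^ 3 * (2 * (1 + log M)) := by gcongr; exact sum_endWeight_le M
    _ ≤ (M + M / 2) / M ^ 3 * (2 * (log M * (3 / 2) + log M)) := by gcongr <;> linarith
    _ ≤ 8 * log M / M ^ 2 := by
        field_simp
        linarith

lemma sum_mul_cellLength_mul_endWeight_le (hM : 2 ≤ M) (g : ℕ → ℝ) :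
    ∑ k ∈ Finset.range M, g k * (cellLength M k * endWeight M k) ≤
      √(∑ k ∈ Finset.range M, g k ^ 2 * cellLength M k) * (√(8 * log M) / M) := by
  have hsqrt {k : ℕ} (hk : k ∈ Finset.range M) : √(cellLength M k) ^ 2 = cellLength M k :=
    sq_sqrt (cellLength_nonneg (by linarith [k.cast_nonneg (α := ℝ)])
      (by exact_mod_cast (Finset.mem_range.1 hk).le))
  have cauchy := sum_mul_le_sqrt_mul_sqrt (Finset.range M) (fun k ↦ g k * √(cellLength M k))
    (fun k ↦ √(cellLength M k) * endWeight M k)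
  calc ∑ k ∈ Finset.range M, g k * (cellLength M k * endWeight M k)
      = ∑ k ∈ Finset.range M, g k * √(cellLength M k) * (√(cellLength M k) * endWeight M k) :=
        Finset.sum_congr rfl fun k hk ↦ by nth_rw 1 [← hsqrt hk]; ring
    _ ≤ √(∑ k ∈ Finset.range M, g k ^ 2 * cellLength M k) *
        √(∑ k ∈ Finset.range M, cellLength M k * endWeight M k ^ 2) := by
        refine cauchy.trans_eq ?_
        congr 2 <;> exact Finset.sum_congr rfl fun k hk ↦ by rw [mul_pow, hsqrt hk]
    _ ≤ √(∑ k ∈ Finset.range M, g k ^ 2 * cellLength M k) * (√(8 * log M) / M) := by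
        rw [← sqrt_sq M.cast_nonneg, ← sqrt_div' _ (sq_nonneg _), sqrt_sq M.cast_nonneg]
        gcongr
        exact sum_cellLength_mul_endWeight_sq_le hM

end GridWeight

/-! ### Geometry of the grid -/

section GridGeometry

open Real

variable {M i : ℕ} {t t' : ℝ}

lemma gridPoint_zero (M : ℕ) : gridPoint M 0 = 1 := by simp [gridPoint, gridAngle]

lemma gridPoint_sub (hM : M ≠ 0) (t : ℝ) : gridPoint M (M - t) = -gridPoint M t := by
  have hangle : gridAngle M (M - t) = π - gridAngle M t := by
    rw [gridAngle, gridAngle]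
    field_simp
  rw [gridPoint, gridPoint, hangle, cos_pi_sub]

lemma gridPoint_self (hM : M ≠ 0) : gridPoint M M = -1 := by
  simpa [gridPoint_zero] using gridPoint_sub hM 0

lemma gridPoint_strictAntiOn (M : ℕ) : StrictAntiOn (gridPoint M) (Icc 0 M) := by
  intro t ht t' ht' h
  have hM : (0 : ℝ) < M := ht.1.trans_lt (h.trans_le ht'.2)
  refine strictAntiOn_cos (gridAngle_mem_Icc ht.1 ht.2) (gridAngle_mem_Icc ht'.1 ht'.2) ?_
  rw [gridAngle, gridAngle]
  have := pi_pos
  gcongr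

lemma gridPoint_mem_Ioo (ht : 0 < t) (htM : t < M) : gridPoint M t ∈ Ioo (-1) 1 := by
  have hM : (0 : ℝ) ≤ M := M.cast_nonneg
  constructor
  · rw [← gridPoint_self (M := M) (by rintro rfl; simp at htM; linarith)]
    exact gridPoint_strictAntiOn M ⟨ht.le, htM.le⟩ ⟨hM, le_rfl⟩ htM
  · rw [← gridPoint_zero M]
    exact gridPoint_strictAntiOn M ⟨le_rfl, hM⟩ ⟨ht.le, htM.le⟩ ht

lemma Icc_gridPoint_subset_image (M : ℕ) (h : t ≤ t') :
    Icc (gridPoint M t') (gridPoint M t) ⊆ gridPoint M '' Icc t t' :=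
  intermediate_value_Icc' h (continuous_cos.comp (continuous_mul_const _)).continuousOn

lemma one_sub_gridPoint_le {s : ℝ} (ht : 0 ≤ t) (hts : t ≤ s) :
    1 - gridPoint M t ≤ 5 * (s / M) ^ 2 := by
  calc 1 - gridPoint M t ≤ gridAngle M t ^ 2 / 2 := by
        linarith [one_sub_sq_div_two_le_cos (x := gridAngle M t), gridPoint.eq_1 M t]
    _ = π ^ 2 / 2 * (t / M) ^ 2 := by rw [gridAngle]; ring
    _ ≤ 5 * (s / M) ^ 2 := by
        gcongr
        nlinarith [pi_lt_d2, pi_pos]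

lemma le_one_sub_gridPoint {s : ℝ} (hs : 0 ≤ s) (hst : s / 4 ≤ t) (htM : t ≤ M) :
    1 / 8 * (s / M) ^ 2 ≤ 1 - gridPoint M t := by
  obtain ⟨hangle₀, hangle⟩ := gridAngle_mem_Icc (by linarith) htM
  calc 1 / 8 * (s / M) ^ 2 = 2 * (s / 4 / M) ^ 2 := by ring
    _ ≤ 2 * (t / M) ^ 2 := by gcongr
    _ = 2 / π ^ 2 * gridAngle M t ^ 2 := by rw [gridAngle]; field_simp
    _ ≤ 1 - gridPoint M t := by
        linarith [cos_le_one_sub_mul_cos_sq (x := gridAngle M t) (by rwa [abs_of_nonneg hangle₀]),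
          gridPoint.eq_1 M t]

lemma mul_sq_rpow_mul_mul_sq_rpow {c u v α β : ℝ} (hc : 0 ≤ c) (hu : 0 ≤ u) (hv : 0 ≤ v)
    (hα : 0 ≤ α) (hβ : 0 ≤ β) :
    (c * v ^ 2) ^ α * (c * u ^ 2) ^ β = c ^ (α + β) * (u ^ (2 * β) * v ^ (2 * α)) := by
  rw [mul_rpow hc (by positivity), mul_rpow hc (by positivity), ← rpow_natCast_mul hu,
    ← rpow_natCast_mul hv, rpow_add_of_nonneg hc hα hβ]
  push_cast
  ring

/-- The middle half of `gridCell M i` on the angular scale. It stays away from the endpoints `±1`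
even for the extreme cells, so that the weight is comparable to a constant on it. -/
def midCell (M i : ℕ) : Set ℝ := Icc (gridPoint M (i + 3 / 4)) (gridPoint M (i + 1 / 4))

variable {α β x : ℝ}

lemma jacobi_le_mul_gridWeight (hα : 0 ≤ α) (hβ : 0 ≤ β) (hi : i < M) (hx : x ∈ gridCell M i) :
    jacobi α β x ≤ 5 ^ (α + β) * gridWeight M (2 * β) (2 * α) i := by
  have hiM : (i : ℝ) + 1 ≤ M := by exact_mod_cast hi
  have : (0 : ℝ) ≤ i := i.cast_nonneg
  obtain ⟨hx₀, hx₁⟩ := gridCell_subset M i hx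
  obtain ⟨t, ⟨hit, hti⟩, rfl⟩ := Icc_gridPoint_subset_image M (by linarith) hx
  have hright := one_sub_gridPoint_le (M := M) (by linarith) hti
  have hleft := one_sub_gridPoint_le (M := M) (t := M - t) (s := M - i) (by linarith) (by linarith)
  rw [gridPoint_sub (by omega), sub_neg_eq_add] at hleft
  rw [gridWeight, ← mul_sq_rpow_mul_mul_sq_rpow (by norm_num) (by positivity)
    (div_nonneg (by linarith) M.cast_nonneg) hα hβ]
  exact mul_le_mul (rpow_le_rpow (by linarith) hleft hα) (rpow_le_rpow (by linarith) hright hβ)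
    (rpow_nonneg (by linarith) β) (by positivity)

lemma mul_gridWeight_le_jacobi (hα : 0 ≤ α) (hβ : 0 ≤ β) (hi : i < M)
    (hx : x ∈ midCell M i) :
    (1 / 8) ^ (α + β) * gridWeight M (2 * β) (2 * α) i ≤ jacobi α β x := by
  have hiM : (i : ℝ) + 1 ≤ M := by exact_mod_cast hi
  have : (0 : ℝ) ≤ i := i.cast_nonneg
  obtain ⟨t, ⟨hit, hti⟩, rfl⟩ := Icc_gridPoint_subset_image M (by linarith) hx
  have hright := le_one_sub_gridPoint (M := M) (t := t) (s := i + 1) (by linarith) (by linarith)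
    (by linarith)
  have hleft := le_one_sub_gridPoint (M := M) (t := M - t) (s := M - i) (by linarith) (by linarith)
    (by linarith)
  rw [gridPoint_sub (by omega), sub_neg_eq_add] at hleft
  rw [gridWeight, ← mul_sq_rpow_mul_mul_sq_rpow (by norm_num) (by positivity)
    (div_nonneg (by linarith) M.cast_nonneg) hα hβ]
  exact mul_le_mul (rpow_le_rpow (by positivity) hleft hα) (rpow_le_rpow (by positivity) hright hβ)
    (by positivity) (rpow_nonneg (le_trans (by positivity) hleft) α)

lemma two_div_pi_sq_mul_le_sin {θ : ℝ} (hθ : θ ∈ Icc 0 π) :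
    2 / π ^ 2 * (θ * (π - θ)) ≤ sin θ := by
  obtain ⟨hθ₀, hθπ⟩ := hθ
  wlog hhalf : θ ≤ π / 2 generalizing θ
  · have h := this (θ := π - θ) (by linarith) (by linarith) (by linarith)
    rwa [sin_pi_sub, sub_sub_cancel, mul_comm (π - θ)] at h
  calc 2 / π ^ 2 * (θ * (π - θ)) ≤ 2 / π ^ 2 * (θ * π) := by gcongr; linarith
    _ = 2 / π * θ := by field_simp
    _ ≤ sin θ := mul_le_sin hθ₀ hhalf

lemma sin_le_two_div_pi_mul {θ : ℝ} (hθ : θ ∈ Icc 0 π) : sin θ ≤ 2 / π * (θ * (π - θ)) := by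
  obtain ⟨hθ₀, hθπ⟩ := hθ
  wlog hhalf : θ ≤ π / 2 generalizing θ
  · have h := this (θ := π - θ) (by linarith) (by linarith) (by linarith)
    rwa [sin_pi_sub, sub_sub_cancel, mul_comm (π - θ)] at h
  calc sin θ ≤ θ := sin_le hθ₀
    _ = 2 / π * (θ * (π - π / 2)) := by field_simp; ring
    _ ≤ 2 / π * (θ * (π - θ)) := by gcongr

lemma gridPoint_sub_gridPoint (M : ℕ) (t t' : ℝ) : gridPoint M t - gridPoint M t' =
    2 * sin (gridAngle M ((t + t') / 2)) * sin (gridAngle M ((t' - t) / 2)) := by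
  have hadd : (gridAngle M t + gridAngle M t') / 2 = gridAngle M ((t + t') / 2) := by
    simp only [gridAngle]; ring
  have hsub : (gridAngle M t - gridAngle M t') / 2 = -gridAngle M ((t' - t) / 2) := by
    simp only [gridAngle]; ring
  rw [gridPoint, gridPoint, cos_sub_cos, hadd, hsub, sin_neg]
  ring

lemma gridAngle_mul_pi_sub (hM : M ≠ 0) (t : ℝ) :
    gridAngle M t * (π - gridAngle M t) = π ^ 2 * (t * (M - t)) / M ^ 2 := by
  rw [gridAngle]
  field_simp

lemma gridPoint_sub_gridPoint_le (ht : 0 ≤ t) (htt' : t ≤ t') (ht' : t' ≤ M) (hM : M ≠ 0) :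
    gridPoint M t - gridPoint M t' ≤
      20 * ((t + t') / 2 * (M - (t + t') / 2) * (t' - t) / M ^ 3) := by
  have hm := gridAngle_mem_Icc (M := M) (t := (t + t') / 2) (by linarith) (by linarith)
  have hd := (gridAngle_mem_Icc (M := M) (t := (t' - t) / 2) (by linarith) (by linarith)).1
  have hprod : 0 ≤ (t + t') / 2 * (M - (t + t') / 2) * (t' - t) / M ^ 3 :=
    div_nonneg (mul_nonneg (mul_nonneg (by linarith) (by linarith)) (by linarith)) (by positivity)
  rw [gridPoint_sub_gridPoint]
  calc 2 * sin (gridAngle M ((t + t') / 2)) * sin (gridAngle M ((t' - t) / 2))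
      ≤ 2 * sin (gridAngle M ((t + t') / 2)) * gridAngle M ((t' - t) / 2) := by
        have := sin_nonneg_of_mem_Icc hm
        gcongr
        exact sin_le hd
    _ ≤ 2 * (2 / π * (π ^ 2 * ((t + t') / 2 * (M - (t + t') / 2)) / M ^ 2)) *
        gridAngle M ((t' - t) / 2) := by
        gcongr
        exact (sin_le_two_div_pi_mul hm).trans_eq (by rw [gridAngle_mul_pi_sub hM])
    _ = 2 * π ^ 2 * ((t + t') / 2 * (M - (t + t') / 2) * (t' - t) / M ^ 3) := by
        rw [gridAngle]; field_simp
    _ ≤ _ := by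
        gcongr
        nlinarith [pi_lt_d2, pi_pos]

lemma le_gridPoint_sub_gridPoint (ht : 0 ≤ t) (htt' : t ≤ t') (ht' : t' ≤ M) (hM : M ≠ 0) :
    4 * ((t + t') / 2 * (M - (t + t') / 2) * (t' - t) / M ^ 3) ≤
      gridPoint M t - gridPoint M t' := by
  have hm := gridAngle_mem_Icc (M := M) (t := (t + t') / 2) (by linarith) (by linarith)
  have hd := gridAngle_mem_Icc (M := M) (t := t' - t) (by linarith) (by linarith)
  have hhalf : gridAngle M ((t' - t) / 2) = gridAngle M (t' - t) / 2 := by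
    rw [gridAngle, gridAngle]; ring
  rw [gridPoint_sub_gridPoint, hhalf]
  calc 4 * ((t + t') / 2 * (M - (t + t') / 2) * (t' - t) / M ^ 3)
      = 2 * (2 / π ^ 2 * (π ^ 2 * ((t + t') / 2 * (M - (t + t') / 2)) / M ^ 2)) *
        (2 / π * (gridAngle M (t' - t) / 2)) := by rw [gridAngle]; field_simp; ring
    _ ≤ 2 * sin (gridAngle M ((t + t') / 2)) * (2 / π * (gridAngle M (t' - t) / 2)) := by
        have := hd.1
        gcongr
        exact (two_div_pi_sq_mul_le_sin hm).trans_eq' (by rw [gridAngle_mul_pi_sub hM])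
    _ ≤ 2 * sin (gridAngle M ((t + t') / 2)) * sin (gridAngle M (t' - t) / 2) := by
        have := sin_nonneg_of_mem_Icc hm
        gcongr
        exact mul_le_sin (by linarith [hd.1]) (by linarith [hd.2])

lemma cellLength_eq (M : ℕ) (t : ℝ) : cellLength M t = (t + 1) * (M - t) / M ^ 3 := by
  rw [cellLength]
  ring

lemma volume_gridCell_le (hi : i < M) :
    volume (gridCell M i) ≤ ENNReal.ofReal (20 * cellLength M i) := by
  have hiM : (i : ℝ) + 1 ≤ M := by exact_mod_cast hi
  have hi₀ : (0 : ℝ) ≤ i := i.cast_nonneg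
  rw [gridCell, volume_Icc]
  refine ENNReal.ofReal_le_ofReal ((gridPoint_sub_gridPoint_le hi₀ (by linarith) hiM
    (by omega)).trans ?_)
  have hmid : (i + (i + 1)) / 2 * (M - (i + (i + 1)) / 2) * (i + 1 - i) ≤
      (i + 1) * (M - i : ℝ) := by
    nlinarith
  rw [cellLength_eq]
  gcongr

lemma cellLength_div_le_gridPoint_sub (hi : i < M) (hit : i + 1 / 4 ≤ t) (hti : t ≤ i + 1 / 2) :
    cellLength M i / 16 ≤ gridPoint M t - gridPoint M (t + 1 / 4) := by
  have hiM : (i : ℝ) + 1 ≤ M := by exact_mod_cast hi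
  have : (0 : ℝ) ≤ i := i.cast_nonneg
  refine le_trans ?_ (le_gridPoint_sub_gridPoint (by linarith) (by linarith) (by linarith)
    (by omega))
  have hmid : (i + 1) / 4 * ((M - i) / 4) ≤ (t + (t + 1 / 4)) / 2 * (M - (t + (t + 1 / 4)) / 2) :=
    mul_le_mul (by linarith) (by linarith) (by linarith) (by linarith)
  calc cellLength M i / 16 = 4 * ((i + 1) / 4 * ((M - i) / 4) * (t + 1 / 4 - t) / M ^ 3) := by
        rw [cellLength_eq]; ring
    _ ≤ _ := by
        gcongr
        linarith

end GridGeometry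

/-! ### Discretization of the weighted norm -/

section Discretization

open Real

variable {M i : ℕ} {α β r : ℝ} {f : ℝ → ℝ}

lemma gridWeight_natCast_nonneg (a b : ℝ) (hi : i < M) : 0 ≤ gridWeight M a b i :=
  gridWeight_nonneg (by linarith [i.cast_nonneg (α := ℝ)]) (by exact_mod_cast hi.le)

lemma cellLength_natCast_nonneg (hi : i < M) : 0 ≤ cellLength M i :=
  cellLength_nonneg (by linarith [i.cast_nonneg (α := ℝ)]) (by exact_mod_cast hi.le)

/-- The value of `f` at the angular midpoint of `gridCell M i`. -/
def midValue (M : ℕ) (f : ℝ → ℝ) (i : ℕ) : ℝ := f (gridPoint M (i + 1 / 2))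

lemma midCell_subset_Ioo (hi : i < M) : midCell M i ⊆ Ioo (-1) 1 := by
  have hiM : (i : ℝ) + 1 ≤ M := by exact_mod_cast hi
  exact Icc_subset_Ioo (gridPoint_mem_Ioo (by positivity) (by linarith)).1
    (gridPoint_mem_Ioo (by positivity) (by linarith)).2

lemma midPoint_mem_Ioo (hi : i < M) : gridPoint M (i + 1 / 2) ∈ Ioo (-1) 1 := by
  have hiM : (i : ℝ) + 1 ≤ M := by exact_mod_cast hi
  exact gridPoint_mem_Ioo (by positivity) (by linarith)

lemma pairwiseDisjoint_midCell (M : ℕ) : (Finset.range M : Set ℕ).PairwiseDisjoint (midCell M) := by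
  have hlt : ∀ i j : ℕ, i < j → j < M → Disjoint (midCell M i) (midCell M j) := by
    intro i j hij hj
    have hij' : (i : ℝ) + 1 ≤ j := by exact_mod_cast hij
    have hjM : (j : ℝ) + 1 ≤ M := by exact_mod_cast hj
    have hanti := gridPoint_strictAntiOn M (a := i + 3 / 4) (b := j + 1 / 4)
      ⟨by positivity, by linarith⟩ ⟨by positivity, by linarith⟩ (by linarith)
    exact Set.disjoint_left.2 fun x hx hx' ↦ (hx'.2.trans_lt hanti).not_ge hx.1
  intro i hi j hj hij
  rcases hij.lt_or_gt with h | h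
  · exact hlt i j h (Finset.mem_range.1 hj)
  · exact (hlt j i h (Finset.mem_range.1 hi)).symm

lemma ofReal_mul_le_setLIntegral_Icc {g : ℝ → ℝ} {a b c l : ℝ} (hc : 0 ≤ c) (hl : l ≤ b - a)
    (hg : ∀ x ∈ Icc a b, c ≤ g x) :
    ENNReal.ofReal (c * l) ≤ ∫⁻ x in Icc a b, ENNReal.ofReal (g x) :=
  calc ENNReal.ofReal (c * l) ≤ ENNReal.ofReal c * volume (Icc a b) := by
        rw [ENNReal.ofReal_mul hc, volume_Icc]
        gcongr
    _ = ∫⁻ _ in Icc a b, ENNReal.ofReal c := (setLIntegral_const _ _).symm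
    _ ≤ _ := setLIntegral_mono' measurableSet_Icc fun x hx ↦ ENNReal.ofReal_le_ofReal (hg x hx)

-- A monotone `f` is at least as large in modulus as its midpoint value on one side of the midpoint.
lemma exists_abs_midValue_le (hf : MonotoneOn f (Ioo (-1) 1)) (hi : i < M) :
    ∃ a b, Icc a b ⊆ midCell M i ∧ cellLength M i / 16 ≤ b - a ∧
      ∀ x ∈ Icc a b, |midValue M f i| ≤ |f x| := by
  have hiM : (i : ℝ) + 1 ≤ M := by exact_mod_cast hi
  have : (0 : ℝ) ≤ i := i.cast_nonneg
  have hanti := (gridPoint_strictAntiOn M).antitoneOn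
  have hmid := midPoint_mem_Ioo hi
  rcases le_total 0 (midValue M f i) with hsign | hsign
  · have hsub : Icc (gridPoint M (i + 1 / 2)) (gridPoint M (i + 1 / 4)) ⊆ midCell M i :=
      Icc_subset_Icc_left (hanti ⟨by linarith, by linarith⟩ ⟨by linarith, by linarith⟩
        (by linarith))
    refine ⟨_, _, hsub, ?_, fun x hx ↦ ?_⟩
    · convert cellLength_div_le_gridPoint_sub hi le_rfl (by linarith) using 3
      ring
    · exact abs_le_abs_of_nonneg hsign (hf hmid (midCell_subset_Ioo hi (hsub hx)) hx.1)
  · have hsub : Icc (gridPoint M (i + 3 / 4)) (gridPoint M (i + 1 / 2)) ⊆ midCell M i :=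
      Icc_subset_Icc_right (hanti ⟨by linarith, by linarith⟩ ⟨by linarith, by linarith⟩
        (by linarith))
    refine ⟨_, _, hsub, ?_, fun x hx ↦ ?_⟩
    · convert cellLength_div_le_gridPoint_sub hi (by linarith) le_rfl using 3
      ring
    · exact abs_le_abs_of_nonpos hsign (hf (midCell_subset_Ioo hi (hsub hx)) hmid hx.2)

lemma ofReal_midValue_rpow_le_setLIntegral (hr : 0 ≤ r) (hα : 0 ≤ α) (hβ : 0 ≤ β)
    (hf : MonotoneOn f (Ioo (-1) 1)) (hi : i < M) :
    ENNReal.ofReal (((1 / 8) ^ (α + β)) ^ r / 16 *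
        (|midValue M f i| ^ r * (gridWeight M (2 * β) (2 * α) i ^ r * cellLength M i))) ≤
      ∫⁻ x in midCell M i, ENNReal.ofReal (|jacobi α β x * f x| ^ r) := by
  obtain ⟨a, b, hsub, hlen, hle⟩ := exists_abs_midValue_le hf hi
  have hweight := gridWeight_natCast_nonneg (2 * β) (2 * α) hi
  calc _ = ENNReal.ofReal (((1 / 8) ^ (α + β) * gridWeight M (2 * β) (2 * α) i *
        |midValue M f i|) ^ r * (cellLength M i / 16)) := by
          rw [mul_rpow (by positivity) (by positivity), mul_rpow (by positivity) (by positivity)]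
          ring_nf
    _ ≤ ∫⁻ x in Icc a b, ENNReal.ofReal (|jacobi α β x * f x| ^ r) := by
          refine ofReal_mul_le_setLIntegral_Icc (by positivity) hlen fun x hx ↦ ?_
          have hjacobi := mul_gridWeight_le_jacobi hα hβ hi (hsub hx)
          rw [abs_mul, abs_of_nonneg (le_trans (by positivity) hjacobi)]
          have habs := hle x hx
          gcongr
          exact le_trans (by positivity) hjacobi
    _ ≤ _ := lintegral_mono_set hsub

lemma exists_sum_midValue_rpow_le (hr : 0 ≤ r) (hα : 0 ≤ α) (hβ : 0 ≤ β) :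
    ∃ K > 0, ∀ f, MonotoneOn f (Ioo (-1) 1) →
      ∫⁻ x in Icc (-1) 1, ENNReal.ofReal (|jacobi α β x * f x| ^ r) ≤ 1 → ∀ M,
      ∑ i ∈ Finset.range M,
        |midValue M f i| ^ r * (gridWeight M (2 * β) (2 * α) i ^ r * cellLength M i) ≤ K := by
  have hc : 0 < ((1 / 8 : ℝ) ^ (α + β)) ^ r / 16 := by positivity
  refine ⟨(((1 / 8 : ℝ) ^ (α + β)) ^ r / 16)⁻¹, by positivity, fun f hf hnorm M ↦ ?_⟩
  rw [← one_div, le_div_iff₀' hc, Finset.mul_sum, ← ENNReal.ofReal_le_one]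
  rw [ENNReal.ofReal_sum_of_nonneg fun i hi ↦ ?nonneg]
  case nonneg =>
    have := gridWeight_natCast_nonneg (2 * β) (2 * α) (Finset.mem_range.1 hi)
    have := cellLength_natCast_nonneg (Finset.mem_range.1 hi)
    positivity
  calc _ ≤ ∑ i ∈ Finset.range M, ∫⁻ x in midCell M i, ENNReal.ofReal (|jacobi α β x * f x| ^ r) :=
        Finset.sum_le_sum fun i hi ↦
          ofReal_midValue_rpow_le_setLIntegral hr hα hβ hf (Finset.mem_range.1 hi)
    _ = ∫⁻ x in ⋃ i ∈ Finset.range M, midCell M i, ENNReal.ofReal (|jacobi α β x * f x| ^ r) :=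
        (lintegral_biUnion_finset (pairwiseDisjoint_midCell M)
          (fun _ _ ↦ measurableSet_Icc) _).symm
    _ ≤ ∫⁻ x in Icc (-1) 1, ENNReal.ofReal (|jacobi α β x * f x| ^ r) :=
        lintegral_mono_set <| iUnion₂_subset fun i hi ↦
          (midCell_subset_Ioo (Finset.mem_range.1 hi)).trans Ioo_subset_Icc_self
    _ ≤ 1 := hnorm

end Discretization

/-! ### The upper bound -/

section UpperBound

open Real Polynomial

variable {M n s i : ℕ} {α β p : ℝ} {f g : ℝ → ℝ}

lemma exists_polynomial_abs_sub_eval_le_localVariation {s : ℕ} (hs : 2 ≤ s) :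
    ∃ C > 0, ∀ n (F : ℕ → ℝ), ∃ P : ℝ[X], P.natDegree ≤ n ∧
      ∀ i ≤ n, ∀ x ∈ gridCell (n + 1) i, |F i - P.eval x| ≤ C * localVariation n s F i := by
  obtain ⟨C, hC, h⟩ := exists_polynomial_partition_of_unity (r := s) (by omega)
  refine ⟨4 * C, by positivity, fun n F ↦ ?_⟩
  obtain ⟨Λ, hdeg, hsum, hnonneg, hdecay⟩ := h n
  refine ⟨∑ j ∈ Finset.range (n + 1), Polynomial.C (F j) * Λ j,
    natDegree_sum_le_of_forall_le _ _ fun j _ ↦ (natDegree_C_mul_le _ _).trans (hdeg j),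
    fun i hi x hx ↦ ?_⟩
  have hx' := gridCell_subset (n + 1) i hx
  simpa only [eval_finsetSum, eval_mul, eval_C] using
    abs_sub_sum_mul_le_localVariation hs hi (fun j ↦ hnonneg j x hx') (hsum x hx')
      (fun j hj ↦ hdecay i hi j hj x hx) F

lemma abs_sub_succ_le_mul_localVariation (n s : ℕ) (F : ℕ → ℝ) (i : ℕ) {k : ℕ} (hk : k < n) :
    |F k - F (k + 1)| ≤ (1 + |(i : ℝ) - k|) ^ s * localVariation n s F i := by
  rw [← div_le_iff₀' (by positivity)]
  exact Finset.single_le_sum (f := fun k : ℕ ↦ |F k - F (k + 1)| / (1 + |(i : ℝ) - k|) ^ s)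
    (fun _ _ ↦ by positivity) (Finset.mem_range.2 hk)

lemma midValue_antitoneOn (hf : MonotoneOn f (Ioo (-1) 1)) (n : ℕ) :
    AntitoneOn (midValue (n + 1) f) (Iic n) := by
  intro i hi j hj hij
  have hij' : (i : ℝ) ≤ j := by exact_mod_cast hij
  have hj' : (j : ℝ) ≤ n := by exact_mod_cast hj
  refine hf (midPoint_mem_Ioo (Nat.lt_succ_of_le hj)) (midPoint_mem_Ioo (Nat.lt_succ_of_le hi))
    ((gridPoint_strictAntiOn (n + 1)).antitoneOn ⟨by positivity, ?_⟩ ⟨by positivity, ?_⟩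
      (by linarith)) <;>
  · push_cast
    linarith

-- On an interior cell `f` lies between its values at the midpoints of the two adjacent cells.
lemma abs_sub_midValue_le_localVariation (hf : MonotoneOn f (Ioo (-1) 1)) (s : ℕ) (hi₀ : 0 < i)
    (hi : i < n) {x : ℝ} (hx : x ∈ gridCell (n + 1) i) :
    |f x - midValue (n + 1) f i| ≤ (2 ^ s + 1) * localVariation n s (midValue (n + 1) f) i := by
  obtain ⟨j, rfl⟩ : ∃ j, i = j + 1 := ⟨i - 1, by omega⟩
  have hjn : (j : ℝ) + 2 ≤ n := by exact_mod_cast hi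
  have : (0 : ℝ) ≤ j := j.cast_nonneg
  have hx' : x ∈ Ioo (-1) 1 := Icc_subset_Ioo
    (gridPoint_mem_Ioo (by positivity) (by push_cast; linarith)).1
    (gridPoint_mem_Ioo (by positivity) (by push_cast; linarith)).2 hx
  have hanti := (gridPoint_strictAntiOn (n + 1)).antitoneOn
  have hupper : f x ≤ midValue (n + 1) f j :=
    hf hx' (midPoint_mem_Ioo (by omega)) <| hx.2.trans <|
      hanti ⟨by positivity, by push_cast; linarith⟩ ⟨by positivity, by push_cast; linarith⟩
        (by push_cast; linarith)
  have hlower : midValue (n + 1) f (j + 2) ≤ f x :=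
    hf (midPoint_mem_Ioo (by omega)) hx' <| le_trans
      (hanti ⟨by positivity, by push_cast; linarith⟩ ⟨by positivity, by push_cast; linarith⟩
        (by push_cast; linarith)) hx.1
  set F := midValue (n + 1) f
  have hleft : |F j - F (j + 1)| ≤ 2 ^ s * localVariation n s F (j + 1) := by
    convert abs_sub_succ_le_mul_localVariation n s F (j + 1) (k := j) (by omega)
    norm_num
  have hright : |F (j + 1) - F (j + 2)| ≤ localVariation n s F (j + 1) := by
    simpa using abs_sub_succ_le_mul_localVariation n s F (j + 1) hi
  rw [abs_le] at *
  constructor <;> linarith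

lemma Icc_subset_iUnion_gridCell (hM : M ≠ 0) :
    Icc (-1) 1 ⊆ ⋃ i : Fin M, gridCell M i := by
  intro x hx
  rw [← gridPoint_self hM, ← gridPoint_zero M] at hx
  obtain ⟨t, ⟨ht₀, htM⟩, rfl⟩ := Icc_gridPoint_subset_image M M.cast_nonneg hx
  obtain ⟨i, hi, hit, hti⟩ : ∃ i < M, (i : ℝ) ≤ t ∧ t ≤ i + 1 := by
    rcases htM.lt_or_eq with h | rfl
    · exact ⟨⌊t⌋₊, (Nat.floor_lt ht₀).2 h, Nat.floor_le ht₀, (Nat.lt_floor_add_one t).le⟩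
    · refine ⟨M - 1, by omega, by exact_mod_cast Nat.sub_le _ _, ?_⟩
      exact_mod_cast (by omega : M ≤ M - 1 + 1)
  have hiM : (i : ℝ) + 1 ≤ M := by exact_mod_cast hi
  have hanti := (gridPoint_strictAntiOn M).antitoneOn
  exact mem_iUnion_of_mem ⟨i, hi⟩
    ⟨hanti ⟨ht₀, htM⟩ ⟨by positivity, hiM⟩ hti, hanti ⟨by positivity, by linarith⟩ ⟨ht₀, htM⟩ hit⟩

lemma setLIntegral_Icc_le_sum_gridCell (hM : M ≠ 0) (φ : ℝ → ℝ≥0∞) :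
    ∫⁻ x in Icc (-1) 1, φ x ≤ ∑ i ∈ Finset.range M, ∫⁻ x in gridCell M i, φ x := by
  refine (lintegral_mono_set (Icc_subset_iUnion_gridCell hM)).trans
    ((lintegral_iUnion_le _ _).trans_eq ?_)
  rw [tsum_fintype, Fin.sum_univ_eq_sum_range fun i ↦ ∫⁻ x in gridCell M i, φ x]

lemma setLIntegral_gridCell_le_of_abs_le (hp : 0 ≤ p) (hα : 0 ≤ α) (hβ : 0 ≤ β) (hi : i < M)
    {B : ℝ} (hB : 0 ≤ B) (hg : ∀ x ∈ gridCell M i, |g x| ≤ B) :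
    ∫⁻ x in gridCell M i, ENNReal.ofReal (|jacobi α β x * g x| ^ p) ≤
      ENNReal.ofReal (20 * (5 ^ (α + β)) ^ p *
        (gridWeight M (2 * β) (2 * α) i ^ p * cellLength M i * B ^ p)) := by
  have hweight := gridWeight_natCast_nonneg (2 * β) (2 * α) hi
  calc _ ≤ ∫⁻ x in gridCell M i,
          ENNReal.ofReal ((5 ^ (α + β) * gridWeight M (2 * β) (2 * α) i * B) ^ p) := by
        refine setLIntegral_mono' measurableSet_Icc fun x hx ↦ ENNReal.ofReal_le_ofReal ?_
        have hjacobi := jacobi_nonneg (α := α) (β := β) (gridCell_subset M i hx)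
        rw [abs_mul, abs_of_nonneg hjacobi]
        gcongr
        exacts [jacobi_le_mul_gridWeight hα hβ hi hx, hg x hx]
    _ ≤ ENNReal.ofReal ((5 ^ (α + β) * gridWeight M (2 * β) (2 * α) i * B) ^ p) *
          ENNReal.ofReal (20 * cellLength M i) := by
        rw [setLIntegral_const]
        gcongr
        exact volume_gridCell_le hi
    _ = _ := by
        rw [← ENNReal.ofReal_mul (by positivity), mul_rpow (by positivity) hB,
          mul_rpow (by positivity) hweight]
        ring_nf

lemma rpow_le_add_rpow_two_mul_div {y m : ℝ} (hy : 0 ≤ y) (hm : 0 < m) (p : ℝ) :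
    y ^ p ≤ m + y ^ (2 * p) / m := by
  have hsq : y ^ (2 * p) = (y ^ p) ^ 2 := by rw [mul_comm, rpow_mul hy, rpow_two]
  rw [hsq, ← sub_le_iff_le_add', le_div_iff₀ hm]
  nlinarith [sq_nonneg (y ^ p - m), mul_nonneg hm.le (rpow_nonneg hy p)]

lemma cellLength_of_end (hend : i = 0 ∨ i + 1 = M) : cellLength M i = 1 / M ^ 2 := by
  rcases hend with rfl | rfl
  · rcases eq_or_ne (M : ℝ) 0 with hM | hM
    · simp [cellLength, hM]
    · rw [cellLength]
      field_simp
      simp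
  · rw [cellLength]
    push_cast
    field_simp
    ring

lemma setLIntegral_gridCell_rpow_le_of_end (hi : i < M) (hend : i = 0 ∨ i + 1 = M)
    (hg : ∫⁻ x in Icc (-1) 1, ENNReal.ofReal (|g x| ^ (2 * p)) ≤ 1) :
    ∫⁻ x in gridCell M i, ENNReal.ofReal (|g x| ^ p) ≤ ENNReal.ofReal (21 / M) := by
  have hM : (0 : ℝ) < M := by exact_mod_cast i.zero_le.trans_lt hi
  calc ∫⁻ x in gridCell M i, ENNReal.ofReal (|g x| ^ p)
      ≤ ∫⁻ x in gridCell M i,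
          (ENNReal.ofReal M + ENNReal.ofReal (1 / M) * ENNReal.ofReal (|g x| ^ (2 * p))) := by
        refine lintegral_mono fun x ↦ ?_
        rw [← ENNReal.ofReal_mul (by positivity), ← ENNReal.ofReal_add hM.le (by positivity),
          one_div_mul_eq_div]
        exact ENNReal.ofReal_le_ofReal (rpow_le_add_rpow_two_mul_div (abs_nonneg _) hM p)
    _ ≤ ENNReal.ofReal M * ENNReal.ofReal (20 * cellLength M i) + ENNReal.ofReal (1 / M) * 1 := by
        rw [lintegral_add_left measurable_const, setLIntegral_const,
          lintegral_const_mul' _ _ ENNReal.ofReal_ne_top]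
        gcongr
        exacts [volume_gridCell_le hi, (lintegral_mono_set (gridCell_subset M i)).trans hg]
    _ = ENNReal.ofReal (21 / M) := by
        rw [mul_one, ← ENNReal.ofReal_mul hM.le, cellLength_of_end hend,
          ← ENNReal.ofReal_add (by positivity) (by positivity)]
        congr 1
        field_simp
        norm_num

lemma setLIntegral_gridCell_le_of_abs_le_add (hp : 1 ≤ p) (hα : 0 ≤ α) (hβ : 0 ≤ β) (hi : i < M)
    (hend : i = 0 ∨ i + 1 = M) {B : ℝ} (hB : 0 ≤ B)
    (hf : ∫⁻ x in Icc (-1) 1, ENNReal.ofReal (|jacobi α β x * f x| ^ (2 * p)) ≤ 1)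
    (hg : ∀ x ∈ gridCell M i, |g x| ≤ |f x| + B) :
    ∫⁻ x in gridCell M i, ENNReal.ofReal (|jacobi α β x * g x| ^ p) ≤
      ENNReal.ofReal (2 ^ (p - 1) * (21 / M + 20 * (5 ^ (α + β)) ^ p *
        (gridWeight M (2 * β) (2 * α) i ^ p * cellLength M i * B ^ p))) := by
  have hp₀ : 0 ≤ p := by linarith
  have hweight := gridWeight_natCast_nonneg (2 * β) (2 * α) hi
  have hlength := cellLength_natCast_nonneg hi
  calc _ ≤ ∫⁻ x in gridCell M i, ENNReal.ofReal (2 ^ (p - 1)) *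
          (ENNReal.ofReal (|jacobi α β x * f x| ^ p) +
            ENNReal.ofReal (|jacobi α β x * B| ^ p)) := by
        refine setLIntegral_mono' measurableSet_Icc fun x hx ↦ ?_
        rw [← ENNReal.ofReal_add (by positivity) (by positivity),
          ← ENNReal.ofReal_mul (by positivity)]
        refine ENNReal.ofReal_le_ofReal (le_trans ?_
          (add_rpow_le_two_rpow_mul hp (abs_nonneg _) (abs_nonneg _)))
        gcongr
        rw [abs_mul, abs_mul, abs_mul, ← mul_add, abs_of_nonneg hB]
        gcongr
        exact hg x hx
    _ ≤ ENNReal.ofReal (2 ^ (p - 1)) * (ENNReal.ofReal (21 / M) +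
          ENNReal.ofReal (20 * (5 ^ (α + β)) ^ p *
            (gridWeight M (2 * β) (2 * α) i ^ p * cellLength M i * B ^ p))) := by
        have hmeas : Continuous fun x ↦ |jacobi α β x * B| ^ p :=
          ((continuous_jacobi hα hβ).mul continuous_const).abs.rpow_const fun _ ↦ .inr hp₀
        rw [lintegral_const_mul' _ _ ENNReal.ofReal_ne_top,
          lintegral_add_right _ hmeas.measurable.ennreal_ofReal]
        gcongr
        exacts [setLIntegral_gridCell_rpow_le_of_end hi hend hf,
          setLIntegral_gridCell_le_of_abs_le hp₀ hα hβ hi hB fun _ _ ↦ (abs_of_nonneg hB).le]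
    _ = _ := by
        rw [← ENNReal.ofReal_add (by positivity) (by positivity),
          ← ENNReal.ofReal_mul (by positivity)]

lemma setLIntegral_gridCell_sub_le_of_interior (hp : 0 ≤ p) (hα : 0 ≤ α) (hβ : 0 ≤ β)
    (hf : MonotoneOn f (Ioo (-1) 1)) (hi₀ : 0 < i) (hi : i < n) {K : ℝ} (hK : 0 ≤ K)
    (hg : ∀ x ∈ gridCell (n + 1) i,
      |midValue (n + 1) f i - g x| ≤ K * localVariation n s (midValue (n + 1) f) i) :
    ∫⁻ x in gridCell (n + 1) i, ENNReal.ofReal (|jacobi α β x * (f x - g x)| ^ p) ≤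
      ENNReal.ofReal (20 * (5 ^ (α + β)) ^ p * ((K + 2 ^ s + 1) ^ p *
        (gridWeight (n + 1) (2 * β) (2 * α) i ^ p * cellLength (n + 1) i *
          localVariation n s (midValue (n + 1) f) i ^ p))) := by
  have hvar := localVariation_nonneg n s (midValue (n + 1) f) i
  refine (setLIntegral_gridCell_le_of_abs_le hp hα hβ (by omega)
    (B := (K + 2 ^ s + 1) * localVariation n s (midValue (n + 1) f) i) (by positivity)
    fun x hx ↦ ?_).trans_eq ?_
  · linarith [abs_sub_le (f x) (midValue (n + 1) f i) (g x), hg x hx,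
      abs_sub_midValue_le_localVariation hf s hi₀ hi hx]
  · rw [mul_rpow (by positivity) hvar]
    ring_nf

lemma setLIntegral_gridCell_sub_le_of_end (hp : 1 ≤ p) (hα : 0 ≤ α) (hβ : 0 ≤ β)
    (hf : ∫⁻ x in Icc (-1) 1, ENNReal.ofReal (|jacobi α β x * f x| ^ (2 * p)) ≤ 1) (hi : i < M)
    (hend : i = 0 ∨ i + 1 = M) {F D : ℝ} (hg : ∀ x ∈ gridCell M i, |F - g x| ≤ D) (hD : 0 ≤ D) :
    ∫⁻ x in gridCell M i, ENNReal.ofReal (|jacobi α β x * (f x - g x)| ^ p) ≤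
      ENNReal.ofReal ((2 ^ (p - 1)) ^ 2 * (20 * (5 ^ (α + β)) ^ p *
        (gridWeight M (2 * β) (2 * α) i ^ p * cellLength M i * D ^ p +
          |F| ^ p * (gridWeight M (2 * β) (2 * α) i ^ p *
            (cellLength M i * endWeight M i))) + 21 / M)) := by
  have hiM : (i : ℝ) + 1 ≤ M := by exact_mod_cast hi
  have hweight := gridWeight_natCast_nonneg (2 * β) (2 * α) hi
  have hlength := cellLength_natCast_nonneg hi
  have hone : (1 : ℝ) ≤ 2 ^ (p - 1) := one_le_rpow one_le_two (by linarith)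
  have hendWeight : 1 ≤ endWeight M i :=
    one_le_endWeight i.cast_nonneg hiM (by exact_mod_cast hend)
  refine (setLIntegral_gridCell_le_of_abs_le_add hp hα hβ hi hend (B := |F| + D) (by positivity)
    hf fun x hx ↦ ?_).trans (ENNReal.ofReal_le_ofReal ?_)
  · linarith [abs_sub_le (f x) F (g x), abs_sub (f x) F, hg x hx]
  set c : ℝ := 2 ^ (p - 1)
  set A : ℝ := 20 * (5 ^ (α + β)) ^ p
  set w := gridWeight M (2 * β) (2 * α) i ^ p
  calc c * (21 / M + A * (w * cellLength M i * (|F| + D) ^ p))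
      ≤ c * (c * (21 / M) + A * (w * cellLength M i * (c * (|F| ^ p + D ^ p)))) := by
        gcongr
        · exact le_mul_of_one_le_left (by positivity) hone
        · exact add_rpow_le_two_rpow_mul hp (abs_nonneg F) hD
    _ = c ^ 2 * (A * (w * cellLength M i * D ^ p + |F| ^ p * (w * (cellLength M i * 1))) +
          21 / M) := by ring
    _ ≤ _ := by gcongr

lemma endWeight_natCast_nonneg (hi : i < M) : 0 ≤ endWeight M i :=
  endWeight_nonneg (by linarith [i.cast_nonneg (α := ℝ)]) (by exact_mod_cast hi.le)

lemma setLIntegral_gridCell_sub_le (hp : 1 ≤ p) (hα : 0 ≤ α) (hβ : 0 ≤ β)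
    (hf : MonotoneOn f (Ioo (-1) 1))
    (hnorm : ∫⁻ x in Icc (-1) 1, ENNReal.ofReal (|jacobi α β x * f x| ^ (2 * p)) ≤ 1)
    (hi : i ≤ n) {K : ℝ} (hK : 0 ≤ K)
    (hg : ∀ x ∈ gridCell (n + 1) i,
      |midValue (n + 1) f i - g x| ≤ K * localVariation n s (midValue (n + 1) f) i) :
    ∫⁻ x in gridCell (n + 1) i, ENNReal.ofReal (|jacobi α β x * (f x - g x)| ^ p) ≤
      ENNReal.ofReal ((2 ^ (p - 1)) ^ 2 * (20 * (5 ^ (α + β)) ^ p * ((K + 2 ^ s + 1) ^ p *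
        (gridWeight (n + 1) (2 * β) (2 * α) i ^ p * cellLength (n + 1) i *
          localVariation n s (midValue (n + 1) f) i ^ p) +
        |midValue (n + 1) f i| ^ p * (gridWeight (n + 1) (2 * β) (2 * α) i ^ p *
          (cellLength (n + 1) i * endWeight (n + 1) i))) +
        if i = 0 ∨ i = n then (21 / ↑(n + 1) : ℝ) else 0)) := by
  have hi' : i < n + 1 := by omega
  have hvar := localVariation_nonneg n s (midValue (n + 1) f) i
  have hweight := gridWeight_natCast_nonneg (2 * β) (2 * α) hi'
  have hlength := cellLength_natCast_nonneg hi'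
  have hendWeight := endWeight_natCast_nonneg hi'
  have hone : (1 : ℝ) ≤ 2 ^ (p - 1) := one_le_rpow one_le_two (by linarith)
  split_ifs with hend
  · refine (setLIntegral_gridCell_sub_le_of_end hp hα hβ hnorm hi' (by omega) hg
      (by positivity)).trans (ENNReal.ofReal_le_ofReal ?_)
    rw [mul_rpow hK hvar, mul_left_comm (_ * _) (K ^ p)]
    push_cast
    gcongr
    linarith [pow_pos (zero_lt_two' ℝ) s]
  · refine (setLIntegral_gridCell_sub_le_of_interior (by linarith) hα hβ hf (by omega) (by omega)
      hK hg).trans (ENNReal.ofReal_le_ofReal ?_)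
    refine le_trans ?_ (le_mul_of_one_le_left (by positivity) (one_le_pow₀ hone))
    rw [add_zero]
    gcongr
    exact le_add_of_nonneg_right (by positivity)

lemma exists_sum_midValue_rpow_mul_endWeight_le (hp : 0 ≤ p) (hα : 0 ≤ α) (hβ : 0 ≤ β) :
    ∃ K > 0, ∀ f, MonotoneOn f (Ioo (-1) 1) →
      ∫⁻ x in Icc (-1) 1, ENNReal.ofReal (|jacobi α β x * f x| ^ (2 * p)) ≤ 1 → ∀ M, 2 ≤ M →
      ∑ i ∈ Finset.range M, |midValue M f i| ^ p *
        (gridWeight M (2 * β) (2 * α) i ^ p * (cellLength M i * endWeight M i)) ≤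
        K * (√(log M) / M) := by
  obtain ⟨K, hK, h⟩ := exists_sum_midValue_rpow_le (r := 2 * p) (by positivity) hα hβ
  refine ⟨√K * √8, by positivity, fun f hf hnorm M hM ↦ ?_⟩
  have hrpow {y : ℝ} (hy : 0 ≤ y) : (y ^ p) ^ 2 = y ^ (2 * p) := by
    rw [mul_comm, rpow_mul hy, rpow_two]
  calc _ = ∑ i ∈ Finset.range M, |midValue M f i| ^ p * gridWeight M (2 * β) (2 * α) i ^ p *
          (cellLength M i * endWeight M i) := by simp only [mul_assoc]
    _ ≤ √(∑ i ∈ Finset.range M, (|midValue M f i| ^ p * gridWeight M (2 * β) (2 * α) i ^ p) ^ 2 *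
          cellLength M i) * (√(8 * log M) / M) := sum_mul_cellLength_mul_endWeight_le hM _
    _ ≤ √K * (√(8 * log M) / M) := by
        gcongr
        refine (Finset.sum_congr rfl fun i hi ↦ ?_).trans_le (h f hf hnorm M)
        rw [mul_pow, hrpow (abs_nonneg _),
          hrpow (gridWeight_natCast_nonneg _ _ (Finset.mem_range.1 hi)), mul_assoc]
    _ = √K * √8 * (√(log M) / M) := by
        rw [sqrt_mul (by norm_num)]
        ring

lemma sum_range_ite_end_le (n : ℕ) {c : ℝ} (hc : 0 ≤ c) :
    ∑ i ∈ Finset.range (n + 1), (if i = 0 ∨ i = n then c else 0) ≤ 2 * c := by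
  rw [← Finset.sum_filter, Finset.sum_const, nsmul_eq_mul]
  gcongr
  have hsub : (Finset.range (n + 1)).filter (fun i ↦ i = 0 ∨ i = n) ⊆ {0, n} := by grind
  exact_mod_cast (Finset.card_le_card hsub).trans Finset.card_le_two

lemma one_div_le_two_mul_sqrt_log_div (hM : 2 ≤ M) : (1 : ℝ) / M ≤ 2 * (√(log M) / M) := by
  have hlog : log 2 ≤ log M := log_le_log zero_lt_two (by exact_mod_cast hM)
  have hsqrt : 1 / 2 ≤ √(log M) := le_sqrt_of_sq_le (by linarith [log_two_gt_d9])
  rw [← mul_div_assoc]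
  gcongr
  linarith

lemma sum_range_ite_end_le_sqrt_log (hn : 1 ≤ n) :
    ∑ i ∈ Finset.range (n + 1), (if i = 0 ∨ i = n then (21 / ↑(n + 1) : ℝ) else 0) ≤
      84 * (√(log ↑(n + 1)) / ↑(n + 1)) := by
  refine (sum_range_ite_end_le n (by positivity)).trans ?_
  linarith [one_div_le_two_mul_sqrt_log_div (M := n + 1) (by omega),
    mul_one_div (21 : ℝ) ↑(n + 1)]

lemma sum_ofReal_mul_add_le {ι : Type*} {t : Finset ι} {v z e : ι → ℝ} {c A B V Z E : ℝ}
    (hc : 0 ≤ c) (hA : 0 ≤ A) (hB : 0 ≤ B) (hv : ∀ i ∈ t, 0 ≤ v i) (hz : ∀ i ∈ t, 0 ≤ z i)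
    (he : ∀ i ∈ t, 0 ≤ e i) (hV : ∑ i ∈ t, v i ≤ V) (hZ : ∑ i ∈ t, z i ≤ Z)
    (hE : ∑ i ∈ t, e i ≤ E) :
    ∑ i ∈ t, ENNReal.ofReal (c * (A * (B * v i + z i) + e i)) ≤
      ENNReal.ofReal (c * (A * (B * V + Z) + E)) := by
  rw [← ENNReal.ofReal_sum_of_nonneg fun i hi ↦ mul_nonneg hc <| add_nonneg
    (mul_nonneg hA (add_nonneg (mul_nonneg hB (hv i hi)) (hz i hi))) (he i hi)]
  refine ENNReal.ofReal_le_ofReal ?_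
  simp only [← Finset.mul_sum, Finset.sum_add_distrib]
  gcongr

lemma exists_polynomial_setLIntegral_sub_le (hp : 1 ≤ p) (hα : 0 ≤ α) (hβ : 0 ≤ β) :
    ∃ C > 0, ∀ n, 1 ≤ n → ∀ f, MonotoneOn f (Ioo (-1) 1) →
      ∫⁻ x in Icc (-1) 1, ENNReal.ofReal (|jacobi α β x * f x| ^ (2 * p)) ≤ 1 →
      ∃ P : ℝ[X], P.natDegree ≤ n ∧
        ∫⁻ x in Icc (-1) 1, ENNReal.ofReal (|jacobi α β x * (f x - P.eval x)| ^ p) ≤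
          ENNReal.ofReal (C * (√(log ↑(n + 1)) / ↑(n + 1))) := by
  have hp₀ : 0 ≤ p := by linarith
  obtain ⟨s, hs⟩ := exists_nat_ge ((2 * β + 2 * α) * p + 4)
  have hs₂ : 2 ≤ s := by
    have : (2 : ℝ) ≤ s := le_trans (by nlinarith [mul_nonneg (add_nonneg hα hβ) hp₀]) hs
    exact_mod_cast this
  obtain ⟨K, hK, hquasi⟩ := exists_polynomial_abs_sub_eval_le_localVariation hs₂
  obtain ⟨C₁, hC₁, hschur⟩ := sum_gridWeight_rpow_mul_cellLength_mul_localVariation_rpow_le hp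
    (by positivity) (by positivity) hs
  obtain ⟨C₂, hC₂, hcauchy⟩ := exists_sum_midValue_rpow_mul_endWeight_le hp₀ hα hβ
  refine ⟨(2 ^ (p - 1)) ^ 2 * (20 * (5 ^ (α + β)) ^ p *
    ((K + 2 ^ s + 1) ^ p * (C₁ * C₂) + C₂) + 84), by positivity, fun n hn f hf hnorm ↦ ?_⟩
  obtain ⟨P, hdeg, hP⟩ := hquasi n (midValue (n + 1) f)
  refine ⟨P, hdeg, (setLIntegral_Icc_le_sum_gridCell n.succ_ne_zero _).trans
    ((Finset.sum_le_sum fun i hi ↦ setLIntegral_gridCell_sub_le hp hα hβ hf hnorm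
      (Finset.mem_range_succ_iff.1 hi) hK.le (hP i (Finset.mem_range_succ_iff.1 hi))).trans ?_)⟩
  have hweighted := hcauchy f hf hnorm (n + 1) (by omega)
  have hvariation := (hschur n _ (midValue_antitoneOn hf n)).trans
    (mul_le_mul_of_nonneg_left hweighted hC₁.le)
  refine (sum_ofReal_mul_add_le (by positivity) (by positivity) (by positivity) (fun i hi ↦ ?_)
    (fun i hi ↦ ?_) (fun i hi ↦ ?_) hvariation hweighted
    (sum_range_ite_end_le_sqrt_log hn)).trans_eq (by ring_nf)
  all_goals
    have hweight := gridWeight_natCast_nonneg (2 * β) (2 * α) (Finset.mem_range.1 hi)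
    have hlength := cellLength_natCast_nonneg (Finset.mem_range.1 hi)
    have hendWeight := endWeight_natCast_nonneg (Finset.mem_range.1 hi)
    have hvar := localVariation_nonneg n s (midValue (n + 1) f) i
    positivity

lemma setLIntegral_rpow_two_mul_eq_one {q : ℝ≥0∞} (hq₀ : q ≠ 0) (hq : q ≠ ∞)
    (hf : f ∈ BSet (2 * q) α β) :
    ∫⁻ x in Icc (-1) 1, ENNReal.ofReal (|jacobi α β x * f x| ^ (2 * q.toReal)) = 1 := by
  have hnorm := hf.2
  rw [LpOn_eq_lintegral (mul_ne_zero two_ne_zero hq₀) (ENNReal.mul_ne_top ENNReal.ofNat_ne_top hq),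
    ENNReal.toReal_mul, ENNReal.toReal_ofNat] at hnorm
  have hexp : 1 / (2 * q.toReal) ≠ 0 :=
    one_div_ne_zero (mul_ne_zero two_ne_zero (ENNReal.toReal_ne_zero.2 ⟨hq₀, hq⟩))
  exact ENNReal.rpow_left_injective hexp (hnorm.trans (ENNReal.one_rpow _).symm)

theorem exists_pos_EClass_monotone_le {q : ℝ≥0∞} (hq₁ : 1 ≤ q) (hq : q ≠ ∞) (hα : 0 ≤ α)
    (hβ : 0 ≤ β) :
    ∃ c > 0, ∀ n : ℕ, 1 ≤ n → EClass (MSet 1 ∩ BSet (2 * q) α β) n (jacobi α β) q ≤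
      ENNReal.ofReal (c * (n : ℝ) ^ (-(1 / q.toReal)) *
        log ((n : ℝ) + 1) ^ (1 / (2 * q.toReal))) := by
  have hq₀ : q ≠ 0 := (zero_lt_one.trans_le hq₁).ne'
  have hp : 1 ≤ q.toReal := ENNReal.toReal_one ▸ ENNReal.toReal_mono hq hq₁
  set p := q.toReal
  obtain ⟨C, hC, h⟩ := exists_polynomial_setLIntegral_sub_le hp hα hβ
  refine ⟨C ^ (1 / p), by positivity, fun n hn ↦ iSup₂_le fun f hf ↦ ?_⟩
  obtain ⟨P, hdeg, hP⟩ := h n hn f (mem_MSet_one_iff.1 hf.1)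
    (setLIntegral_rpow_two_mul_eq_one hq₀ hq hf.2).le
  have hn₀ : (0 : ℝ) < n := by exact_mod_cast hn
  have hlog : 0 ≤ log ((n : ℝ) + 1) := log_nonneg (by linarith)
  have hmono : C * (√(log ↑(n + 1)) / ↑(n + 1)) ≤ C * ((n : ℝ)⁻¹ * √(log (n + 1))) := by
    rw [inv_mul_eq_div]
    push_cast
    gcongr
    linarith
  calc En n f (jacobi α β) q
      ≤ LpOn (fun x ↦ jacobi α β x * (f x - P.eval x)) q (-1) 1 := iInf₂_le P hdeg
    _ ≤ ENNReal.ofReal (C * ((n : ℝ)⁻¹ * √(log (n + 1)))) ^ (1 / p) := by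
        rw [LpOn_eq_lintegral hq₀ hq]
        gcongr
        exact hP.trans (ENNReal.ofReal_le_ofReal hmono)
    _ = _ := by
        rw [ENNReal.ofReal_rpow_of_nonneg (by positivity) (by positivity), mul_rpow hC.le
          (by positivity), mul_rpow (by positivity) (by positivity), inv_rpow hn₀.le,
          ← rpow_neg hn₀.le, sqrt_eq_rpow, ← rpow_mul hlog, one_div_mul_one_div, mul_assoc]

end UpperBound

theorem statement7 (q : ℝ≥0∞) (hq1 : 1 ≤ q) (hq2 : q ≠ ∞)
    (α β : ℝ) (hα : 0 ≤ α) (hβ : 0 ≤ β) :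
    ∃ c₁ > (0 : ℝ), ∃ c₂ > (0 : ℝ), ∀ n : ℕ, 1 ≤ n →
      ENNReal.ofReal (c₁ * (n : ℝ) ^ (-(1 / q.toReal))) ≤
        EClass (MSet 1 ∩ BSet (2 * q) α β) n (jacobi α β) q ∧
      EClass (MSet 1 ∩ BSet (2 * q) α β) n (jacobi α β) q ≤
        ENNReal.ofReal (c₂ * (n : ℝ) ^ (-(1 / q.toReal)) *
          Real.log ((n : ℝ) + 1) ^ (1 / (2 * q.toReal))) := by
  have hq₀ : q ≠ 0 := (zero_lt_one.trans_le hq1).ne'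
  obtain ⟨c₁, hc₁, hlower⟩ := exists_pos_le_EClass_monotone (mul_ne_zero two_ne_zero hq₀)
    (ENNReal.mul_ne_top ENNReal.ofNat_ne_top hq2) hq₀ hq2 hα hβ
  obtain ⟨c₂, hc₂, hupper⟩ := exists_pos_EClass_monotone_le hq1 hq2 hα hβ
  exact ⟨c₁, hc₁, c₂, hc₂, fun n hn ↦ ⟨hlower n hn, hupper n hn⟩⟩
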